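/- arXiv:2404.15448 — 2 statements merged into one kernel-verified Lean document; each statement's English description precedes it below -/
import Mathlib

section
/- Let μ be a non-negative Poisson measure on ℝ^d, and let B(x_n, R_n) ⊂ ℝ^d be a sequence of balls with R_n → ∞ as n → ∞. If either μ(B(x_n,R_n)) = o(R_n^d) as n → ∞, or |μ̂|(B(x_n,R_n)) = o(R_n^d) as n → ∞, then μ = 0. -/
open MeasureTheory Metric Filter Topology Complex SchwartzMap Bornology
open scoped RealInnerProductSpace ENNReal

noncomputable section

/-- A continuous function `g` is *Bohr almost periodic* if for every `ε > 0` its set of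
`ε`-almost periods is relatively dense. -/
def IsBohrAP {V : Type*} [SeminormedAddCommGroup V] (g : V → ℂ) : Prop :=
  Continuous g ∧ ∀ ε : ℝ, 0 < ε → ∃ L : ℝ, 0 < L ∧ ∀ x : V, ∃ τ : V,
    dist τ x < L ∧ ∀ y : V, ‖g (y + τ) - g y‖ < ε

/-- A pure point complex measure on `V`, described by its (countably supported) mass function. -/
structure PPM (V : Type*) where
  mass : V → ℂ
  countable : (Function.support mass).Countable

namespace PPM

variable {V : Type*}

/-- The total variation of a pure point measure, evaluated on a set. -/
def var (μ : PPM V) (A : Set V) : ℝ≥0∞ := ∑' x : A, (‖μ.mass x‖₊ : ℝ≥0∞)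

/-- Pairing of a pure point measure with a test function: `∫ φ dμ = Σ_x μ{x}·φ(x)`. -/
def pair (μ : PPM V) (φ : V → ℂ) : ℂ := ∑' x, μ.mass x * φ x

/-- Convolution `(μ ⋆ ψ)(t) = ∫ ψ(t - x) dμ(x)`. -/
def conv [SubtractionMonoid V] (μ : PPM V) (ψ : V → ℂ) (t : V) : ℂ :=
  ∑' x, μ.mass x * ψ (t - x)

/-- A pure point measure is non-negative if each mass is a non-negative real number. -/
def Nonneg (μ : PPM V) : Prop := ∀ x, μ.mass x = (‖μ.mass x‖ : ℂ)

end PPM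

/-- Euclidean space `ℝ^d`. -/
abbrev Ed (d : ℕ) := EuclideanSpace ℝ (Fin d)

variable {d : ℕ}

/-- Local finiteness: the total variation of every ball is finite. -/
def PPM.locFinite (μ : PPM (Ed d)) : Prop := ∀ r : ℝ, μ.var (ball 0 r) < ⊤

/-- The measure is a temperate distribution: it pairs (absolutely) with every Schwartz
function. -/
def PPM.temperate (μ : PPM (Ed d)) : Prop :=
  ∀ φ : SchwartzMap (Ed d) ℂ, Summable fun x => μ.mass x * φ x

/-- `ν` is the distributional Fourier transform of `μ`: `μ(φ̂) = ν(φ)` on test functions. -/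
def IsFT (μ ν : PPM (Ed d)) : Prop :=
  ∀ φ : SchwartzMap (Ed d) ℂ, HasCompactSupport φ →
    μ.pair ⇑(FourierTransform.fourierCLE ℂ (SchwartzMap (Ed d) ℂ) φ) = ν.pair ⇑φ

/-- A Poisson measure: a pure point measure which is a temperate distribution and whose
distributional Fourier transform is a pure point measure. -/
def IsPoisson (μ : PPM (Ed d)) : Prop :=
  μ.locFinite ∧ μ.temperate ∧ ∃ ν : PPM (Ed d), ν.locFinite ∧ IsFT μ ν

/-
Test `μ` against the Fourier transform of a compactly supported function `φ` with `𝓕 φ ≥ 0`, dilated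
by `s`, centred at `c` and modulated by a frequency `γ₀` (a wave packet). On the Fourier side this
only sees `μ̂` in the ball of radius `O(1/s)` about `γ₀`, and as `s → ∞` it isolates the atom
`μ̂{γ₀}`; as `s → 0` the other side isolates the atom `μ{c}`.

Positivity of `μ` makes the packet at frequency `0` dominate all the others. Hence
`‖μ̂{γ}‖ ≤ ‖μ̂{0}‖` for all `γ` and, taking `s = 1`, `μ` is translation bounded.

If `μ` is sparse on the balls, take the packet with `s = R n / K` and `c = x n`: the points inside
the ball contribute `o(1)`, and those outside at most `(2πK)⁻²` times the same packet built from
`-Δ φ`. Letting `n → ∞` and then `K → ∞` gives `μ̂{0} = 0`, so `μ̂ = 0` and `μ = 0`.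

If `μ̂` is sparse on the balls, take packets with `s ≍ 1 / R n`, centred at an arbitrary point `a`
and with frequency `x n`: the Fourier side is `o(1)`, while the other side tends in modulus to a
non-zero multiple of `μ{a}`, by translation boundedness and dominated convergence.
-/

open scoped FourierTransform Laplacian ContDiff Convolution

section Preliminaries

variable {E F : Type*}

lemma smul_sub_mem_ball_zero_iff [SeminormedAddCommGroup E] [NormedSpace ℝ E] {r s : ℝ}
    (hs : 0 < s) {a x : E} : s • (x - a) ∈ ball 0 r ↔ x ∈ ball a (r / s) := by
  rw [mem_ball_zero_iff, mem_ball_iff_norm, norm_smul, Real.norm_of_nonneg hs.le, lt_div_iff₀' hs]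

lemma indicator_ball_smul_sub [SeminormedAddCommGroup E] [NormedSpace ℝ E] {r s : ℝ}
    (hs : 0 < s) (a x : E) (C : ℝ≥0∞) :
    (ball 0 r).indicator (fun _ => C) (s • (x - a))
      = (ball a (r / s)).indicator (fun _ => C) x := by
  classical
  simp only [Set.indicator_apply, smul_sub_mem_ball_zero_iff hs]

lemma exists_enorm_le_indicator_ball [SeminormedAddCommGroup E] [NormedAddCommGroup F]
    {f : E → F} (hf : Continuous f) (hc : HasCompactSupport f) :
    ∃ C ≠ (⊤ : ℝ≥0∞), ∃ r > 0, ∀ x, ‖f x‖ₑ ≤ (ball 0 r).indicator (fun _ => C) x := by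
  obtain ⟨C, hC⟩ := hc.exists_bound_of_continuous hf
  obtain ⟨r, hr, hsupp⟩ := hc.isBounded.subset_ball_lt 0 0
  refine ⟨ENNReal.ofReal C, ENNReal.ofReal_ne_top, r, hr, fun x => ?_⟩
  by_cases hx : x ∈ ball 0 r
  · simpa only [Set.indicator_of_mem hx, ← ofReal_norm] using ENNReal.ofReal_le_ofReal (hC x)
  · simp [image_eq_zero_of_notMem_tsupport fun h => hx (hsupp h)]

lemma enorm_circle_smul [SeminormedAddCommGroup E] [NormedSpace ℂ E] (z : Circle) (v : E) :
    ‖z • v‖ₑ = ‖v‖ₑ := by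
  simp only [← ofReal_norm, Circle.norm_smul]

lemma enorm_complex_ofReal_of_nonneg {r : ℝ} (hr : 0 ≤ r) : ‖(r : ℂ)‖ₑ = ENNReal.ofReal r := by
  rw [← ofReal_norm, norm_real, Real.norm_of_nonneg hr]

lemma enorm_tsum_eq_tsum_enorm {ι : Type*} {f : ι → ℂ} (hf : Summable f)
    (hnonneg : ∀ i, f i = ‖f i‖) : ‖∑' i, f i‖ₑ = ∑' i, ‖f i‖ₑ := by
  have hsum : ∑' i, f i = ((∑' i, ‖f i‖ : ℝ) : ℂ) := by
    rw [ofReal_tsum]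
    exact tsum_congr hnonneg
  rw [hsum, enorm_complex_ofReal_of_nonneg (tsum_nonneg fun i => norm_nonneg _),
    ENNReal.ofReal_tsum_of_nonneg (fun i => norm_nonneg _) hf.norm]
  simp only [ofReal_norm]

lemma tendsto_div_ofReal_div_pow {ι : Type*} {l : Filter ι} {v : ι → ℝ≥0∞} {R : ι → ℝ}
    (hv : Tendsto (fun n => v n / ENNReal.ofReal (R n ^ d)) l (𝓝 0)) {K : ℝ} (hK : 0 < K) :
    Tendsto (fun n => v n / ENNReal.ofReal ((R n / K) ^ d)) l (𝓝 0) := by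
  have hKd := pow_pos hK d
  have hlim := ENNReal.Tendsto.mul_const (b := ENNReal.ofReal (K ^ d)) hv
    (Or.inr ENNReal.ofReal_ne_top)
  rw [zero_mul] at hlim
  refine hlim.congr fun n => ?_
  rw [div_pow, ENNReal.ofReal_div_of_pos hKd, div_eq_mul_inv, div_eq_mul_inv,
    ENNReal.inv_div (Or.inl ENNReal.ofReal_ne_top) (Or.inl (ENNReal.ofReal_pos.mpr hKd).ne'),
    mul_assoc, div_eq_mul_inv, mul_comm (ENNReal.ofReal (K ^ d))]

lemma tendsto_smul_cobounded [NormedAddCommGroup E] [NormedSpace ℝ E] {ι : Type*} {l : Filter ι}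
    {s : ι → ℝ} (hs : Tendsto s l atTop) {v : E} (hv : v ≠ 0) :
    Tendsto (fun n => s n • v) l (cobounded E) := by
  rw [← tendsto_norm_atTop_iff_cobounded]
  simpa only [norm_smul, Function.comp_apply] using
    (tendsto_norm_atTop_atTop.comp hs).atTop_mul_const (norm_pos_iff.mpr hv)

lemma one_add_norm_sub_rpow_neg_le [SeminormedAddCommGroup E] {p r : ℝ} (hp : 0 ≤ p) {x y : E}
    (h : dist x y ≤ r) (a : E) :
    (1 + ‖x - a‖) ^ (-p) ≤ (1 + r) ^ p * (1 + ‖y - a‖) ^ (-p) := by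
  have hr : 0 ≤ r := dist_nonneg.trans h
  have hyx : 1 + ‖y - a‖ ≤ (1 + r) * (1 + ‖x - a‖) := by
    have := norm_sub_le_norm_sub_add_norm_sub y x a
    rw [← dist_eq_norm y x, dist_comm] at this
    nlinarith [norm_nonneg (x - a)]
  calc (1 + ‖x - a‖) ^ (-p)
      = (1 + r) ^ p * ((1 + r) * (1 + ‖x - a‖)) ^ (-p) := by
        rw [Real.mul_rpow (by positivity) (by positivity), ← mul_assoc,
          ← Real.rpow_add (by positivity), add_neg_cancel, Real.rpow_zero, one_mul]
    _ ≤ (1 + r) ^ p * (1 + ‖y - a‖) ^ (-p) := by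
        have hpow := Real.rpow_le_rpow_of_nonpos (by positivity) hyx (neg_nonpos.mpr hp)
        gcongr

end Preliminaries

namespace PPM

section Variation

variable {V : Type*} (μ : PPM V)

lemma tsum_enorm_mass_mul_indicator (A : Set V) (C : ℝ≥0∞) :
    ∑' x, ‖μ.mass x‖ₑ * A.indicator (fun _ => C) x = C * μ.var A := by
  rw [var, tsum_subtype A (fun x => (‖μ.mass x‖₊ : ℝ≥0∞)), ← ENNReal.tsum_mul_left]
  refine tsum_congr fun x => ?_
  by_cases hx : x ∈ A <;> simp [hx, mul_comm, enorm_eq_nnnorm]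

lemma enorm_pair_le (φ : V → ℂ) : ‖μ.pair φ‖ₑ ≤ ∑' x, ‖μ.mass x‖ₑ * ‖φ x‖ₑ := by
  simpa only [pair, enorm_mul] using enorm_tsum_le_tsum_enorm (f := fun x => μ.mass x * φ x)

lemma var_mono {A B : Set V} (h : A ⊆ B) : μ.var A ≤ μ.var B :=
  ENNReal.tsum_mono_subtype (fun x => (‖μ.mass x‖₊ : ℝ≥0∞)) h

lemma tsum_support_mass_mul (W : V → ℝ≥0∞) :
    ∑' x : Function.support μ.mass, ‖μ.mass x‖ₑ * W x = ∑' x, ‖μ.mass x‖ₑ * W x :=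
  tsum_subtype_eq_of_support_subset (f := fun x => ‖μ.mass x‖ₑ * W x) fun x hx h => hx (by simp [h])

end Variation

section Atoms

variable {E : Type*} [NormedAddCommGroup E] [NormedSpace ℝ E]

lemma tendsto_enorm_pair_dilate (μ : PPM E) {f : E → ℂ} {a : E}
    (hf : Tendsto f (cobounded E) (𝓝 0)) {B : E → ℝ≥0∞} (hB : ∑' x, ‖μ.mass x‖ₑ * B x ≠ ⊤)
    (hfB : ∀ s : ℝ, 1 ≤ s → ∀ x, ‖f (s • (x - a))‖ₑ ≤ B x)
    {ι : Type*} {l : Filter ι} {s : ι → ℝ} (hs : Tendsto s l atTop) (χ : ι → E → Circle) :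
    Tendsto (fun n => ‖μ.pair fun x => χ n x • f (s n • (x - a))‖ₑ) l
      (𝓝 (‖μ.mass a‖ₑ * ‖f 0‖ₑ)) := by
  classical
  -- The phases need not converge; dividing by `χ n a` keeps the modulus and fixes the term at `a`.
  have hlim : Tendsto (fun n => μ.pair fun x => ((χ n a)⁻¹ * χ n x) • f (s n • (x - a))) l
      (𝓝 (∑' x, if x = a then μ.mass a * f 0 else 0)) := by
    refine tendsto_tsum_of_dominated_convergence (ENNReal.summable_toReal hB) (fun x => ?_) ?_
    · split_ifs with hx
      · simpa [hx] using tendsto_const_nhds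
      · have hfx := (hf.comp (tendsto_smul_cobounded hs (sub_ne_zero.mpr hx))).norm.const_mul
          ‖μ.mass x‖
        rw [tendsto_zero_iff_norm_tendsto_zero]
        simpa only [norm_mul, Circle.norm_smul, norm_zero, mul_zero,
          Function.comp_apply] using hfx
    · filter_upwards [hs.eventually_ge_atTop 1] with n hn x
      rw [← toReal_enorm, enorm_mul, enorm_circle_smul]
      exact ENNReal.toReal_mono (ENNReal.ne_top_of_tsum_ne_top hB x) (by gcongr; exact hfB _ hn x)
  rw [tsum_ite_eq] at hlim
  rw [← enorm_mul]
  refine hlim.enorm.congr fun n => ?_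
  rw [← enorm_circle_smul (χ n a)⁻¹ (μ.pair fun x => χ n x • f (s n • (x - a))), pair, pair,
    ← tsum_const_smul']
  congr! 3 with x
  simp only [Circle.smul_def, smul_eq_mul, Circle.coe_mul]
  ring

end Atoms

section TranslationBounded

/-- A pure point measure is *translation bounded* if, for some radius, the total variations of
all balls of that radius are uniformly bounded. -/
def TranslationBounded {E : Type*} [PseudoMetricSpace E] (μ : PPM E) : Prop :=
  ∃ r > 0, ∃ M ≠ (⊤ : ℝ≥0∞), ∀ c, μ.var (ball c r) ≤ M

variable {E : Type*} [NormedAddCommGroup E]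

lemma tsum_enorm_mass_mul_mul_measure_ball_le [MeasurableSpace E] [BorelSpace E] (μ : PPM E)
    (ν : Measure E) [ν.IsAddHaarMeasure] {r : ℝ} {M : ℝ≥0∞} (hM : ∀ c, μ.var (ball c r) ≤ M)
    {W : E → ℝ≥0∞} (hW : Measurable W) {k : ℝ≥0∞} (hk : ∀ x y, dist x y < r → W x ≤ k * W y) :
    (∑' x, ‖μ.mass x‖ₑ * W x) * ν (ball 0 r) ≤ k * M * ∫⁻ y, W y ∂ν := by
  have : Countable (Function.support μ.mass) := μ.countable.to_subtype
  -- Dominate each `W x` by an average of `k * W` over `ball x r`, then exchange sum and integral.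
  have hball (x : E) : W x * ν (ball 0 r) ≤ ∫⁻ y, (ball x r).indicator (fun y => k * W y) y ∂ν :=
    calc W x * ν (ball 0 r) = ∫⁻ _ in ball x r, W x ∂ν := by
          rw [setLIntegral_const, Measure.addHaar_ball_center ν x]
      _ ≤ ∫⁻ y in ball x r, k * W y ∂ν :=
          setLIntegral_mono' measurableSet_ball fun y hy => hk x y (mem_ball'.mp hy)
      _ = _ := (lintegral_indicator measurableSet_ball _).symm
  calc (∑' x, ‖μ.mass x‖ₑ * W x) * ν (ball 0 r)
      = ∑' x : Function.support μ.mass, ‖μ.mass x‖ₑ * (W x * ν (ball 0 r)) := by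
        rw [μ.tsum_support_mass_mul fun x => W x * ν (ball 0 r), ← ENNReal.tsum_mul_right]
        simp only [mul_assoc]
    _ ≤ ∑' x : Function.support μ.mass, ‖μ.mass x‖ₑ *
          ∫⁻ y, (ball (x : E) r).indicator (fun y => k * W y) y ∂ν := by
        gcongr with x
        exact hball x
    _ = ∫⁻ y, ∑' x : Function.support μ.mass, ‖μ.mass x‖ₑ *
          (ball (x : E) r).indicator (fun y => k * W y) y ∂ν := by
        rw [lintegral_tsum fun x => by
          exact (((hW.const_mul k).indicator measurableSet_ball).const_mul _).aemeasurable]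
        refine tsum_congr fun x => (lintegral_const_mul _ ?_).symm
        exact (hW.const_mul k).indicator measurableSet_ball
    _ = ∫⁻ y, k * W y * μ.var (ball y r) ∂ν := by
        refine lintegral_congr fun y => ?_
        rw [← tsum_enorm_mass_mul_indicator, ← tsum_support_mass_mul]
        simp only [Set.indicator, mem_ball, dist_comm]
    _ ≤ ∫⁻ y, k * M * W y ∂ν := by
        refine lintegral_mono fun y => ?_
        rw [mul_right_comm k M]
        gcongr
        exact hM y
    _ = k * M * ∫⁻ y, W y ∂ν := lintegral_const_mul _ hW

lemma TranslationBounded.tsum_enorm_mass_mul_rpow_ne_top [NormedSpace ℝ E] [FiniteDimensional ℝ E]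
    {μ : PPM E} (hμ : μ.TranslationBounded) {p : ℝ} (hp : Module.finrank ℝ E < p) (a : E) :
    ∑' x, ‖μ.mass x‖ₑ * ENNReal.ofReal ((1 + ‖x - a‖) ^ (-p)) ≠ ⊤ := by
  borelize E
  obtain ⟨r, hr, M, hM, hμM⟩ := hμ
  have hW : Integrable (fun x : E => (1 + ‖x - a‖) ^ (-p)) Measure.addHaar :=
    (integrable_one_add_norm hp).comp_sub_right a
  have hp0 : 0 ≤ p := (Nat.cast_nonneg _).trans hp.le
  have hle := μ.tsum_enorm_mass_mul_mul_measure_ball_le Measure.addHaar hμM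
    (W := fun x => ENNReal.ofReal ((1 + ‖x - a‖) ^ (-p))) (by fun_prop)
    (k := ENNReal.ofReal ((1 + r) ^ p)) fun x y hxy => by
      rw [← ENNReal.ofReal_mul (by positivity)]
      exact ENNReal.ofReal_le_ofReal (one_add_norm_sub_rpow_neg_le hp0 hxy.le a)
  intro htop
  rw [htop, ENNReal.top_mul (measure_ball_pos _ _ hr).ne', top_le_iff] at hle
  exact ENNReal.mul_ne_top (ENNReal.mul_ne_top ENNReal.ofReal_ne_top hM)
    hW.lintegral_lt_top.ne hle

end TranslationBounded

end PPM

section WavePacket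

variable {E : Type*} [NormedAddCommGroup E] [InnerProductSpace ℝ E]

/-- The *wave packet* `γ ↦ e^{2πi⟨γ, c⟩} g (s (γ - γ₀))`: the profile `g` contracted by the factor
`s` around `γ₀`, and modulated so that its Fourier transform is centred at `c`. -/
def wavePacket (g : E → ℂ) (s : ℝ) (c γ₀ γ : E) : ℂ := 𝐞 ⟪γ, c⟫ • g (s • (γ - γ₀))

lemma enorm_wavePacket (g : E → ℂ) (s : ℝ) (c γ₀ γ : E) :
    ‖wavePacket g s c γ₀ γ‖ₑ = ‖g (s • (γ - γ₀))‖ₑ :=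
  enorm_circle_smul _ _

lemma contDiff_wavePacket {g : E → ℂ} {n : WithTop ℕ∞} (hg : ContDiff ℝ n g) (s : ℝ)
    (c γ₀ : E) : ContDiff ℝ n (wavePacket g s c γ₀) := by
  have harg : ContDiff ℝ n fun γ : E => ((2 * Real.pi * ⟪γ, c⟫ : ℝ) : ℂ) * I :=
    (ofRealCLM.contDiff.comp (contDiff_const.mul (contDiff_id.inner ℝ contDiff_const))).mul
      contDiff_const
  exact harg.cexp.mul (hg.comp (by fun_prop))

lemma hasCompactSupport_wavePacket {g : E → ℂ} (hg : HasCompactSupport g) {s : ℝ} (hs : s ≠ 0)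
    (c γ₀ : E) : HasCompactSupport (wavePacket g s c γ₀) :=
  HasCompactSupport.smul_left (f := fun γ => 𝐞 ⟪γ, c⟫)
    (hg.comp_homeomorph ((Homeomorph.subRight γ₀).trans (Homeomorph.smulOfNeZero s hs)))

lemma fourier_wavePacket [FiniteDimensional ℝ E] [MeasurableSpace E] [BorelSpace E] (g : E → ℂ)
    {s : ℝ} (hs : 0 < s) (c γ₀ x : E) :
    𝓕 (wavePacket g s c γ₀) x
      = 𝐞 (-⟪γ₀, x - c⟫) • (s ^ Module.finrank ℝ E)⁻¹ • 𝓕 g (s⁻¹ • (x - c)) := by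
  let G (u : E) : ℂ := 𝐞 (-⟪u, s⁻¹ • (x - c)⟫) • g u
  have hphase (v : E) : -⟪v, x⟫ + ⟪v, c⟫ = -⟪γ₀, x - c⟫ + -⟪s • (v - γ₀), s⁻¹ • (x - c)⟫ := by
    rw [real_inner_smul_left, real_inner_smul_right, mul_inv_cancel_left₀ hs.ne']
    simp only [inner_sub_left, inner_sub_right]
    ring
  calc 𝓕 (wavePacket g s c γ₀) x
      = ∫ v, 𝐞 (-⟪γ₀, x - c⟫) • G (s • (v - γ₀)) := by
        rw [Real.fourier_eq]
        simp only [wavePacket, G, ← mul_smul, ← AddChar.map_add_eq_mul, hphase]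
    _ = 𝐞 (-⟪γ₀, x - c⟫) • ∫ v, G (s • v) := by
        rw [← integral_sub_right_eq_self (fun v => G (s • v)) γ₀]
        simp only [Circle.smul_def, smul_eq_mul, integral_const_mul]
    _ = 𝐞 (-⟪γ₀, x - c⟫) • (s ^ Module.finrank ℝ E)⁻¹ • 𝓕 g (s⁻¹ • (x - c)) := by
        rw [Measure.integral_comp_smul_of_nonneg volume G s (hR := hs.le), Real.fourier_eq]

end WavePacket

section PositiveDefinite

variable {E : Type*} [NormedAddCommGroup E] [InnerProductSpace ℝ E] [FiniteDimensional ℝ E]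

lemma hasCompactSupport_laplacian {φ : 𝓢(E, ℂ)} (hφ : HasCompactSupport φ) :
    HasCompactSupport ⇑(Δ φ : 𝓢(E, ℂ)) := by
  refine HasCompactSupport.intro hφ fun x hx => ?_
  rw [SchwartzMap.laplacian_eq_sum (stdOrthonormalBasis ℝ E), _root_.sum_apply]
  refine Finset.sum_eq_zero fun i _ => image_eq_zero_of_notMem_tsupport fun h => hx ?_
  exact SchwartzMap.tsupport_lineDerivOp_subset _ _ (SchwartzMap.tsupport_lineDerivOp_subset _ _ h)

variable [MeasurableSpace E] [BorelSpace E]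

/-- A compactly supported test function which is positive definite, in the sense that its Fourier
transform is real and non-negative; as in `PPM.Nonneg` this is encoded by `z = ‖z‖`. -/
structure IsPosDefTest (φ : 𝓢(E, ℂ)) : Prop where
  hasCompactSupport : HasCompactSupport φ
  fourier_eq_norm : ∀ x, 𝓕 φ x = ‖𝓕 φ x‖

lemma fourier_neg_laplacian_apply (φ : 𝓢(E, ℂ)) (x : E) :
    𝓕 (-Δ φ) x = ((2 * Real.pi * ‖x‖) ^ 2 : ℝ) * 𝓕 φ x := by
  have hgrowth : ((‖·‖ ^ 2) : E → ℝ).HasTemperateGrowth := by fun_prop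
  rw [SchwartzMap.laplacian_eq_fourierMultiplierCLM, neg_smul, neg_neg,
    FourierTransform.fourier_smul, SchwartzMap.fourierMultiplierCLM_apply,
    FourierTransform.fourier_fourierInv_eq, _root_.smul_apply,
    SchwartzMap.smulLeftCLM_apply_apply hgrowth, smul_smul, ← mul_pow, real_smul]

lemma IsPosDefTest.neg_laplacian {φ : 𝓢(E, ℂ)} (hφ : IsPosDefTest φ) : IsPosDefTest (-Δ φ) where
  hasCompactSupport := (hasCompactSupport_laplacian hφ.hasCompactSupport).neg
  fourier_eq_norm x := by
    rw [fourier_neg_laplacian_apply, norm_mul, ofReal_mul, ← hφ.fourier_eq_norm, norm_real,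
      Real.norm_of_nonneg (sq_nonneg _)]

lemma conj_fourier_eq_self {η : E → ℂ} (hη : ∀ x, (starRingEnd ℂ) (η (-x)) = η x) (x : E) :
    (starRingEnd ℂ) (𝓕 η x) = 𝓕 η x := by
  rw [Real.fourier_eq, ← integral_conj, ← integral_neg_eq_self]
  refine integral_congr_ae (ae_of_all _ fun v => ?_)
  simp only [Circle.smul_def, smul_eq_mul, map_mul, hη, ← Circle.coe_inv_eq_conj,
    ← AddChar.map_neg_eq_inv, inner_neg_left, neg_neg]

lemma fourier_convolution_mul_apply (η θ : 𝓢(E, ℂ)) (x : E) :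
    𝓕 (SchwartzMap.convolution (ContinuousLinearMap.mul ℂ ℂ) η θ) x = 𝓕 η x * 𝓕 θ x := by
  rw [SchwartzMap.fourier_convolution, SchwartzMap.pairing_apply_apply,
    ContinuousLinearMap.mul_apply']

lemma IsPosDefTest.convolution_self {η : 𝓢(E, ℂ)} (hc : HasCompactSupport η)
    (hη : ∀ x, (starRingEnd ℂ) (η (-x)) = η x) :
    IsPosDefTest (SchwartzMap.convolution (ContinuousLinearMap.mul ℂ ℂ) η η) where
  hasCompactSupport := by
    rw [show ⇑(SchwartzMap.convolution (ContinuousLinearMap.mul ℂ ℂ) η η)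
      = η ⋆[ContinuousLinearMap.mul ℂ ℂ] η from funext (SchwartzMap.convolution_apply _ η η)]
    exact hc.convolution _ hc
  fourier_eq_norm x := by
    have hreal : ((𝓕 η x).re : ℂ) = 𝓕 η x := by
      rw [SchwartzMap.fourier_coe]
      exact conj_eq_iff_re.mp (conj_fourier_eq_self hη x)
    rw [fourier_convolution_mul_apply, ← hreal, ← ofReal_mul, norm_real,
      Real.norm_of_nonneg (mul_self_nonneg _)]

lemma IsPosDefTest.apply_zero_ne_zero {φ : 𝓢(E, ℂ)} (hφ : IsPosDefTest φ) {x : E}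
    (hx : 𝓕 φ x ≠ 0) : φ 0 ≠ 0 := by
  have hinv : φ 0 = ((∫ y, ‖𝓕 φ y‖ : ℝ) : ℂ) :=
    calc φ 0 = 𝓕⁻ (𝓕 φ) 0 := by rw [FourierTransform.fourierInv_fourier_eq]
      _ = ∫ y, 𝓕 φ y := by
        rw [SchwartzMap.fourierInv_coe, Real.fourierInv_eq]
        simp only [inner_zero_right, AddChar.map_zero_eq_one, one_smul]
      _ = ((∫ y, ‖𝓕 φ y‖ : ℝ) : ℂ) := by
        rw [← integral_complex_ofReal]
        exact integral_congr_ae (ae_of_all _ hφ.fourier_eq_norm)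
  rw [hinv, ofReal_ne_zero]
  exact (integral_pos_of_integrable_nonneg_nonzero (𝓕 φ).continuous.norm (𝓕 φ).integrable.norm
    (fun y => norm_nonneg _) (norm_ne_zero_iff.mpr hx)).ne'

variable (E) in
lemma exists_isPosDefTest : ∃ φ : 𝓢(E, ℂ), IsPosDefTest φ ∧ 𝓕 φ 0 ≠ 0 := by
  let b : ContDiffBump (0 : E) := ⟨1, 2, one_pos, one_lt_two⟩
  have hc : HasCompactSupport fun x => (b x : ℂ) := b.hasCompactSupport.comp_left ofReal_zero
  let η : 𝓢(E, ℂ) := hc.toSchwartzMap (ofRealCLM.contDiff.comp b.contDiff)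
  have hη0 : 𝓕 η 0 ≠ 0 := by
    have : 𝓕 η 0 = ((∫ x, b x : ℝ) : ℂ) := by
      rw [SchwartzMap.fourier_coe, Real.fourier_eq, ← integral_complex_ofReal]
      simp only [inner_zero_right, neg_zero, AddChar.map_zero_eq_one, one_smul]
      rfl
    rw [this, ofReal_ne_zero]
    exact b.integral_pos.ne'
  refine ⟨_, IsPosDefTest.convolution_self (η := η) hc fun x => ?_, ?_⟩
  · change (starRingEnd ℂ) (b (-x) : ℂ) = b x
    rw [conj_ofReal, b.neg]
  · rw [fourier_convolution_mul_apply]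
    exact mul_ne_zero hη0 hη0

end PositiveDefinite

namespace PPM

section WavePacket

variable {E : Type*} [NormedAddCommGroup E] [InnerProductSpace ℝ E] {g : E → ℂ}

lemma exists_enorm_pair_wavePacket_le (hg : Continuous g) (hc : HasCompactSupport g) :
    ∃ C ≠ (⊤ : ℝ≥0∞), ∃ r > 0, ∀ (ν : PPM E) {s : ℝ}, 0 < s → ∀ c γ₀ : E,
      ‖ν.pair (wavePacket g s c γ₀)‖ₑ ≤ C * ν.var (ball γ₀ (r / s)) := by
  obtain ⟨C, hC, r, hr, hgC⟩ := exists_enorm_le_indicator_ball hg hc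
  refine ⟨C, hC, r, hr, fun ν s hs c γ₀ => ?_⟩
  calc ‖ν.pair (wavePacket g s c γ₀)‖ₑ
      ≤ ∑' γ, ‖ν.mass γ‖ₑ * ‖wavePacket g s c γ₀ γ‖ₑ := ν.enorm_pair_le _
    _ ≤ ∑' γ, ‖ν.mass γ‖ₑ * (ball γ₀ (r / s)).indicator (fun _ => C) γ := by
        gcongr with γ
        rw [enorm_wavePacket, ← indicator_ball_smul_sub hs]
        exact hgC _
    _ = C * ν.var (ball γ₀ (r / s)) := ν.tsum_enorm_mass_mul_indicator _ _

lemma tendsto_enorm_pair_wavePacket {ν : PPM E} (hν : ∀ r, ν.var (ball 0 r) < ⊤)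
    (hg : Continuous g) (hc : HasCompactSupport g) {ι : Type*} {l : Filter ι} {s : ι → ℝ}
    (hs : Tendsto s l atTop) (c : ι → E) (γ₀ : E) :
    Tendsto (fun n => ‖ν.pair (wavePacket g (s n) (c n) γ₀)‖ₑ) l
      (𝓝 (‖ν.mass γ₀‖ₑ * ‖g 0‖ₑ)) := by
  obtain ⟨C, hC, r, hr, hgC⟩ := exists_enorm_le_indicator_ball hg hc
  have hg0 : Tendsto g (cobounded E) (𝓝 0) := by
    refine tendsto_const_nhds.congr' ?_
    filter_upwards [isBounded_def.mp hc.isBounded] with γ hγ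
    exact (image_eq_zero_of_notMem_tsupport hγ).symm
  refine ν.tendsto_enorm_pair_dilate hg0
    (B := (ball γ₀ r).indicator fun _ => C) ?_ (fun s hs γ => ?_) hs fun n γ => 𝐞 ⟪γ, c n⟫
  · rw [tsum_enorm_mass_mul_indicator]
    exact ENNReal.mul_ne_top hC
      ((ν.var_mono (ball_subset_ball' (add_comm _ _).le)).trans_lt (hν (dist γ₀ 0 + r))).ne
  · have hs0 : 0 < s := one_pos.trans_le hs
    refine (hgC _).trans ?_
    rw [indicator_ball_smul_sub hs0]
    exact Set.indicator_le_indicator_of_subset (ball_subset_ball (div_le_self hr.le hs))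
      (fun _ => zero_le) γ

end WavePacket

lemma temperate.summable_dilate {μ : PPM (Ed d)} (hμ : μ.temperate) (f : 𝓢(Ed d, ℂ)) {s : ℝ}
    (hs : s ≠ 0) (c : Ed d) : Summable fun x => μ.mass x * f (s • (x - c)) :=
  hμ (SchwartzMap.compSubConstCLM ℂ c (SchwartzMap.compCLMOfContinuousLinearEquiv ℂ
    (ContinuousLinearEquiv.smulLeft (Units.mk0 s hs)) f))

end PPM

section PositivePoisson

variable {μ μh : PPM (Ed d)} {φ : 𝓢(Ed d, ℂ)} {s : ℝ}

lemma IsFT.pair_wavePacket (h : IsFT μ μh) (hφ : HasCompactSupport φ) (hs : 0 < s)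
    (c γ₀ : Ed d) :
    μ.pair (fun x => 𝐞 (-⟪γ₀, x - c⟫) • 𝓕 φ (s⁻¹ • (x - c)))
      = (s ^ d : ℝ) * μh.pair (wavePacket φ s c γ₀) := by
  have hc := hasCompactSupport_wavePacket hφ hs.ne' c γ₀
  let ψ : 𝓢(Ed d, ℂ) := hc.toSchwartzMap (contDiff_wavePacket (φ.smooth ⊤) s c γ₀)
  have hψ : ⇑ψ = wavePacket φ s c γ₀ := rfl
  have hpair := h ψ hc
  rw [FourierTransform.fourierCLE_apply, SchwartzMap.fourier_coe, hψ] at hpair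
  have hsd : ((s ^ d : ℝ) : ℂ) ≠ 0 := ofReal_ne_zero.mpr (pow_pos hs d).ne'
  rw [← hpair, PPM.pair, PPM.pair, ← tsum_mul_left]
  refine tsum_congr fun x => ?_
  rw [SchwartzMap.fourier_coe, fourier_wavePacket φ hs, finrank_euclideanSpace_fin,
    Circle.smul_def, Circle.smul_def, real_smul, ofReal_inv, smul_eq_mul, smul_eq_mul]
  field_simp

lemma IsFT.tsum_enorm_mass_mul_fourier (h : IsFT μ μh) (hμ : μ.Nonneg) (hμt : μ.temperate)
    (hφ : IsPosDefTest φ) (hs : 0 < s) (c : Ed d) :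
    ∑' x, ‖μ.mass x‖ₑ * ‖𝓕 φ (s⁻¹ • (x - c))‖ₑ
      = ENNReal.ofReal (s ^ d) * ‖μh.pair (wavePacket φ s c 0)‖ₑ := by
  have hpair := h.pair_wavePacket hφ.hasCompactSupport hs c 0
  simp only [inner_zero_left, neg_zero, AddChar.map_zero_eq_one, one_smul] at hpair
  rw [← enorm_complex_ofReal_of_nonneg (pow_nonneg hs.le d), ← enorm_mul, ← hpair,
    PPM.pair, enorm_tsum_eq_tsum_enorm (hμt.summable_dilate (𝓕 φ) (inv_ne_zero hs.ne') c)]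
  · simp only [enorm_mul]
  · intro x
    rw [norm_mul, ofReal_mul, ← hμ x, ← hφ.fourier_eq_norm]

lemma IsFT.enorm_pair_wavePacket_le_enorm_pair_wavePacket_zero (h : IsFT μ μh)
    (hμ : μ.Nonneg) (hμt : μ.temperate) (hφ : IsPosDefTest φ) (hs : 0 < s) (c γ₀ : Ed d) :
    ‖μh.pair (wavePacket φ s c γ₀)‖ₑ ≤ ‖μh.pair (wavePacket φ s c 0)‖ₑ := by
  refine (ENNReal.mul_le_mul_iff_right (ENNReal.ofReal_pos.mpr (pow_pos hs d)).ne'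
    ENNReal.ofReal_ne_top).mp ?_
  calc ENNReal.ofReal (s ^ d) * ‖μh.pair (wavePacket φ s c γ₀)‖ₑ
      = ‖μ.pair (fun x => 𝐞 (-⟪γ₀, x - c⟫) • 𝓕 φ (s⁻¹ • (x - c)))‖ₑ := by
        rw [h.pair_wavePacket hφ.hasCompactSupport hs, enorm_mul,
          enorm_complex_ofReal_of_nonneg (pow_nonneg hs.le d)]
    _ ≤ ∑' x, ‖μ.mass x‖ₑ * ‖𝓕 φ (s⁻¹ • (x - c))‖ₑ := by
        simpa only [enorm_circle_smul] using
          μ.enorm_pair_le (fun x => 𝐞 (-⟪γ₀, x - c⟫) • 𝓕 φ (s⁻¹ • (x - c)))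
    _ = _ := h.tsum_enorm_mass_mul_fourier hμ hμt hφ hs c

lemma IsFT.enorm_fourier_mass_le_enorm_fourier_mass_zero (h : IsFT μ μh) (hμ : μ.Nonneg)
    (hμt : μ.temperate) (hμh : μh.locFinite) (γ : Ed d) : ‖μh.mass γ‖ₑ ≤ ‖μh.mass 0‖ₑ := by
  obtain ⟨φ, hφ, hφ0⟩ := exists_isPosDefTest (Ed d)
  have hlim := PPM.tendsto_enorm_pair_wavePacket hμh φ.continuous hφ.hasCompactSupport
    tendsto_id fun _ => 0
  refine (ENNReal.mul_le_mul_iff_left (enorm_ne_zero.mpr (hφ.apply_zero_ne_zero hφ0))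
    enorm_ne_top).mp (le_of_tendsto_of_tendsto (hlim γ) (hlim 0) ?_)
  filter_upwards [eventually_gt_atTop 0] with s hs
  exact h.enorm_pair_wavePacket_le_enorm_pair_wavePacket_zero hμ hμt hφ hs 0 γ

lemma IsFT.translationBounded (h : IsFT μ μh) (hμ : μ.Nonneg) (hμt : μ.temperate)
    (hμh : μh.locFinite) : μ.TranslationBounded := by
  obtain ⟨φ, hφ, hφ0⟩ := exists_isPosDefTest (Ed d)
  obtain ⟨C, hC, r, -, hbound⟩ :=
    PPM.exists_enorm_pair_wavePacket_le φ.continuous hφ.hasCompactSupport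
  obtain ⟨k, hk0, hk⟩ := exists_between (enorm_pos.mpr hφ0)
  obtain ⟨δ, hδ, hkδ⟩ := Metric.eventually_nhds_iff_ball.mp
    ((𝓕 φ).continuous.enorm.continuousAt.eventually_const_lt hk)
  have hind : (ball 0 δ).indicator (fun _ => k) ≤ fun u => ‖𝓕 φ u‖ₑ :=
    Set.indicator_le fun u hu => (hkδ u hu).le
  refine ⟨δ, hδ, k⁻¹ * (C * μh.var (ball 0 r)), ENNReal.mul_ne_top
    (ENNReal.inv_ne_top.mpr hk0.ne') (ENNReal.mul_ne_top hC (hμh r).ne), fun c => ?_⟩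
  rw [← ENNReal.mul_le_iff_le_inv hk0.ne' (hk.trans_le le_top).ne]
  calc k * μ.var (ball c δ)
      = ∑' x, ‖μ.mass x‖ₑ * (ball c δ).indicator (fun _ => k) x :=
        (μ.tsum_enorm_mass_mul_indicator _ _).symm
    _ ≤ ∑' x, ‖μ.mass x‖ₑ * ‖𝓕 φ ((1 : ℝ)⁻¹ • (x - c))‖ₑ := by
        gcongr with x
        have hx := hind ((1 : ℝ) • (x - c))
        rwa [indicator_ball_smul_sub one_pos, div_one, ← inv_one] at hx
    _ = ‖μh.pair (wavePacket φ 1 c 0)‖ₑ := by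
        rw [h.tsum_enorm_mass_mul_fourier hμ hμt hφ one_pos, one_pow, ENNReal.ofReal_one, one_mul]
    _ ≤ C * μh.var (ball 0 r) := by simpa only [div_one] using hbound μh one_pos c 0

lemma IsFT.mass_eq_zero_of_fourier_mass_eq_zero (h : IsFT μ μh) (hμ : μ.Nonneg) (hμt : μ.temperate)
    (hμh : μh.mass = 0) : μ.mass = 0 := by
  obtain ⟨φ, hφ, hφ0⟩ := exists_isPosDefTest (Ed d)
  funext a
  have hsum := h.tsum_enorm_mass_mul_fourier hμ hμt hφ one_pos a
  simp only [PPM.pair, hμh, Pi.zero_apply, zero_mul, tsum_zero, enorm_zero, mul_zero,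
    ENNReal.tsum_eq_zero, mul_eq_zero, enorm_eq_zero] at hsum
  exact (hsum a).resolve_right (by rwa [sub_self, smul_zero])

end PositivePoisson

section Decay

variable {E : Type*} [NormedAddCommGroup E] [InnerProductSpace ℝ E]

lemma exists_norm_le_mul_one_add_norm_rpow_neg (f : 𝓢(E, ℂ)) (k : ℕ) :
    ∃ C ≥ 0, ∀ x, ‖f x‖ ≤ C * (1 + ‖x‖) ^ (-(k : ℝ)) := by
  refine ⟨2 ^ k * ((Finset.Iic (k, 0)).sup fun m => SchwartzMap.seminorm ℂ m.1 m.2) f,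
    mul_nonneg (by positivity) (apply_nonneg _ f), fun x => ?_⟩
  have hx : 0 < (1 + ‖x‖) ^ k := by positivity
  have hle := SchwartzMap.one_add_le_sup_seminorm_apply (𝕜 := ℂ) (m := (k, 0)) (k := k) (n := 0)
    le_rfl le_rfl f x
  rw [norm_iteratedFDeriv_zero] at hle
  rwa [Real.rpow_neg (by positivity), Real.rpow_natCast, ← div_eq_mul_inv, le_div_iff₀' hx]

-- Chebyshev's inequality for the weight `(2π‖u‖)²` by which `-Δ` multiplies the Fourier transform.
lemma enorm_fourier_le_indicator_add [FiniteDimensional ℝ E] [MeasurableSpace E] [BorelSpace E]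
    {φ : 𝓢(E, ℂ)} {C : ℝ≥0∞} (hC : ∀ u, ‖𝓕 φ u‖ₑ ≤ C) {K : ℝ} (hK : 0 < K) (u : E) :
    ‖𝓕 φ u‖ₑ ≤ (ball 0 K).indicator (fun _ => C) u
      + ENNReal.ofReal ((2 * Real.pi * K) ^ 2)⁻¹ * ‖𝓕 (-Δ φ) u‖ₑ := by
  by_cases hu : u ∈ ball 0 K
  · rw [Set.indicator_of_mem hu]
    exact (hC u).trans le_self_add
  · rw [Set.indicator_of_notMem hu, zero_add, fourier_neg_laplacian_apply, enorm_mul,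
      enorm_complex_ofReal_of_nonneg (sq_nonneg _), ← mul_assoc,
      ← ENNReal.ofReal_mul (by positivity)]
    refine le_mul_of_one_le_left' (ENNReal.one_le_ofReal.mpr ?_)
    rw [← div_eq_inv_mul, one_le_div (by positivity)]
    gcongr
    simpa using hu

end Decay

section SparseBalls

variable {μ μh : PPM (Ed d)}

lemma IsFT.enorm_pair_wavePacket_le_add (h : IsFT μ μh) (hμ : μ.Nonneg) (hμt : μ.temperate)
    {φ : 𝓢(Ed d, ℂ)} (hφ : IsPosDefTest φ) {C : ℝ≥0∞} (hC : ∀ u, ‖𝓕 φ u‖ₑ ≤ C) {K s : ℝ}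
    (hK : 0 < K) (hs : 0 < s) (c : Ed d) :
    ‖μh.pair (wavePacket φ s c 0)‖ₑ ≤ C * (μ.var (ball c (K * s)) / ENNReal.ofReal (s ^ d))
      + ENNReal.ofReal ((2 * Real.pi * K) ^ 2)⁻¹
        * ‖μh.pair (wavePacket (-Δ φ : 𝓢(Ed d, ℂ)) s c 0)‖ₑ := by
  have hsd : ENNReal.ofReal (s ^ d) ≠ 0 := (ENNReal.ofReal_pos.mpr (pow_pos hs d)).ne'
  refine (ENNReal.mul_le_mul_iff_right hsd ENNReal.ofReal_ne_top).mp ?_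
  calc ENNReal.ofReal (s ^ d) * ‖μh.pair (wavePacket φ s c 0)‖ₑ
      = ∑' x, ‖μ.mass x‖ₑ * ‖𝓕 φ (s⁻¹ • (x - c))‖ₑ :=
        (h.tsum_enorm_mass_mul_fourier hμ hμt hφ hs c).symm
    _ ≤ ∑' x, ‖μ.mass x‖ₑ * ((ball c (K * s)).indicator (fun _ => C) x
          + ENNReal.ofReal ((2 * Real.pi * K) ^ 2)⁻¹ * ‖𝓕 (-Δ φ) (s⁻¹ • (x - c))‖ₑ) := by
        gcongr with x
        rw [← div_inv_eq_mul, ← indicator_ball_smul_sub (inv_pos.mpr hs)]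
        exact enorm_fourier_le_indicator_add hC hK _
    _ = C * μ.var (ball c (K * s)) + ENNReal.ofReal ((2 * Real.pi * K) ^ 2)⁻¹
          * (ENNReal.ofReal (s ^ d) * ‖μh.pair (wavePacket (-Δ φ : 𝓢(Ed d, ℂ)) s c 0)‖ₑ) := by
        rw [← h.tsum_enorm_mass_mul_fourier hμ hμt hφ.neg_laplacian hs c,
          ← μ.tsum_enorm_mass_mul_indicator, ← ENNReal.tsum_mul_left, ← ENNReal.tsum_add]
        refine tsum_congr fun x => ?_
        rw [mul_add, mul_left_comm]
    _ = _ := by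
        rw [mul_add, mul_left_comm _ C, ENNReal.mul_div_cancel hsd ENNReal.ofReal_ne_top,
          mul_left_comm (ENNReal.ofReal (s ^ d))]

lemma IsFT.enorm_fourier_mass_zero_mul_le_of_tendsto_var_div (h : IsFT μ μh)
    (hμ : μ.Nonneg) (hμt : μ.temperate) (hμh : μh.locFinite) {φ : 𝓢(Ed d, ℂ)} (hφ : IsPosDefTest φ)
    {x : ℕ → Ed d} {R : ℕ → ℝ} (hR : Tendsto R atTop atTop)
    (hvar : Tendsto (fun n => μ.var (ball (x n) (R n)) / ENNReal.ofReal (R n ^ d)) atTop (𝓝 0))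
    {K : ℝ} (hK : 0 < K) :
    ‖μh.mass 0‖ₑ * ‖φ 0‖ₑ
      ≤ ENNReal.ofReal ((2 * Real.pi * K) ^ 2)⁻¹ * (‖μh.mass 0‖ₑ * ‖(-Δ φ) 0‖ₑ) := by
  obtain ⟨C, hCtop, hC⟩ : ∃ C ≠ (⊤ : ℝ≥0∞), ∀ u, ‖𝓕 φ u‖ₑ ≤ C :=
    ⟨‖(𝓕 φ).toBoundedContinuousFunction‖ₑ, enorm_ne_top, fun u =>
      enorm_le_iff_norm_le.mpr ((𝓕 φ).toBoundedContinuousFunction.norm_coe_le_norm u)⟩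
  have hRK : Tendsto (fun n => R n / K) atTop atTop := hR.atTop_div_const hK
  have hlim {g : 𝓢(Ed d, ℂ)} (hg : IsPosDefTest g) :=
    PPM.tendsto_enorm_pair_wavePacket hμh g.continuous hg.hasCompactSupport hRK x 0
  have hbound :=
    (ENNReal.Tendsto.const_mul (tendsto_div_ofReal_div_pow hvar hK) (Or.inr hCtop)).add
      (ENNReal.Tendsto.const_mul (hlim hφ.neg_laplacian)
        (Or.inr (ENNReal.ofReal_ne_top (r := ((2 * Real.pi * K) ^ 2)⁻¹))))
  rw [mul_zero, zero_add] at hbound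
  refine le_of_tendsto_of_tendsto (hlim hφ) hbound ?_
  filter_upwards [hRK.eventually_gt_atTop 0] with n hn
  have hle := h.enorm_pair_wavePacket_le_add hμ hμt hφ hC hK hn (x n)
  rwa [mul_div_cancel₀ _ hK.ne'] at hle

lemma IsFT.fourier_mass_zero_eq_zero_of_tendsto_var_div (h : IsFT μ μh) (hμ : μ.Nonneg)
    (hμt : μ.temperate) (hμh : μh.locFinite) {x : ℕ → Ed d} {R : ℕ → ℝ} (hR : Tendsto R atTop atTop)
    (hvar : Tendsto (fun n => μ.var (ball (x n) (R n)) / ENNReal.ofReal (R n ^ d)) atTop (𝓝 0)) :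
    μh.mass 0 = 0 := by
  obtain ⟨φ, hφ, hφ0⟩ := exists_isPosDefTest (Ed d)
  have hK : Tendsto (fun K : ℝ => ENNReal.ofReal ((2 * Real.pi * K) ^ 2)⁻¹) atTop (𝓝 0) := by
    rw [← ENNReal.ofReal_zero]
    refine ENNReal.tendsto_ofReal (tendsto_inv_atTop_zero.comp ?_)
    exact (tendsto_pow_atTop two_ne_zero).comp (tendsto_id.const_mul_atTop Real.two_pi_pos)
  have hbound := ENNReal.Tendsto.mul_const (b := ‖μh.mass 0‖ₑ * ‖(-Δ φ) 0‖ₑ) hK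
    (Or.inr (ENNReal.mul_ne_top enorm_ne_top enorm_ne_top))
  rw [zero_mul] at hbound
  have hzero := ge_of_tendsto hbound ((eventually_gt_atTop 0).mono fun K =>
    h.enorm_fourier_mass_zero_mul_le_of_tendsto_var_div hμ hμt hμh hφ hR hvar)
  rw [nonpos_iff_eq_zero, mul_eq_zero, enorm_eq_zero, enorm_eq_zero] at hzero
  exact hzero.resolve_right (hφ.apply_zero_ne_zero hφ0)

lemma IsFT.mass_eq_zero_of_tendsto_var_div (h : IsFT μ μh) (hμ : μ.Nonneg)
    (hμt : μ.temperate) (hμh : μh.locFinite) {x : ℕ → Ed d} {R : ℕ → ℝ} (hR : Tendsto R atTop atTop)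
    (hvar : Tendsto (fun n => μ.var (ball (x n) (R n)) / ENNReal.ofReal (R n ^ d)) atTop (𝓝 0)) :
    μ.mass = 0 := by
  have h0 := h.fourier_mass_zero_eq_zero_of_tendsto_var_div hμ hμt hμh hR hvar
  refine h.mass_eq_zero_of_fourier_mass_eq_zero hμ hμt (funext fun γ => ?_)
  simpa [h0] using h.enorm_fourier_mass_le_enorm_fourier_mass_zero hμ hμt hμh γ

lemma PPM.TranslationBounded.tendsto_enorm_pair_dilate (hμ : μ.TranslationBounded)
    (f : 𝓢(Ed d, ℂ)) (a : Ed d) {ι : Type*} {l : Filter ι} {s : ι → ℝ} (hs : Tendsto s l atTop)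
    (χ : ι → Ed d → Circle) :
    Tendsto (fun n => ‖μ.pair fun x => χ n x • f (s n • (x - a))‖ₑ) l
      (𝓝 (‖μ.mass a‖ₑ * ‖f 0‖ₑ)) := by
  obtain ⟨C, hC0, hC⟩ := exists_norm_le_mul_one_add_norm_rpow_neg f (d + 1)
  have hf : Tendsto f (cobounded (Ed d)) (𝓝 0) := by
    simpa only [Metric.cobounded_eq_cocompact] using zero_at_infty f
  refine μ.tendsto_enorm_pair_dilate hf (B := fun x => ENNReal.ofReal C
    * ENNReal.ofReal ((1 + ‖x - a‖) ^ (-((d + 1 : ℕ) : ℝ)))) ?_ (fun s hs x => ?_) hs χ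
  · simp only [mul_left_comm _ (ENNReal.ofReal C), ENNReal.tsum_mul_left]
    exact ENNReal.mul_ne_top ENNReal.ofReal_ne_top
      (hμ.tsum_enorm_mass_mul_rpow_ne_top (by simp) a)
  · rw [← ENNReal.ofReal_mul hC0, ← ofReal_norm]
    refine ENNReal.ofReal_le_ofReal ((hC _).trans (mul_le_mul_of_nonneg_left ?_ hC0))
    refine Real.rpow_le_rpow_of_nonpos (by positivity) ?_ (neg_nonpos.mpr (Nat.cast_nonneg _))
    rw [norm_smul, Real.norm_of_nonneg (zero_le_one.trans hs)]
    gcongr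
    exact le_mul_of_one_le_left (norm_nonneg _) hs

lemma IsFT.mass_eq_zero_of_tendsto_fourier_var_div (h : IsFT μ μh) (hμ : μ.TranslationBounded)
    {x : ℕ → Ed d} {R : ℕ → ℝ} (hR : Tendsto R atTop atTop)
    (hvar : Tendsto (fun n => μh.var (ball (x n) (R n)) / ENNReal.ofReal (R n ^ d)) atTop (𝓝 0)) :
    μ.mass = 0 := by
  obtain ⟨φ, hφ, hφ0⟩ := exists_isPosDefTest (Ed d)
  obtain ⟨C, hC, r, hr, hbound⟩ :=
    PPM.exists_enorm_pair_wavePacket_le φ.continuous hφ.hasCompactSupport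
  funext a
  have hRr : Tendsto (fun n => R n / r) atTop atTop := hR.atTop_div_const hr
  have hlim := hμ.tendsto_enorm_pair_dilate (𝓕 φ) a hRr fun n y => 𝐞 (-⟪x n, y - a⟫)
  have hsparse := ENNReal.Tendsto.const_mul (tendsto_div_ofReal_div_pow hvar hr) (Or.inr hC)
  rw [mul_zero] at hsparse
  have hle := le_of_tendsto_of_tendsto hlim hsparse <| by
    filter_upwards [hRr.eventually_gt_atTop 0] with n hn
    have hs : 0 < (R n / r)⁻¹ := inv_pos.mpr hn
    have hpair := h.pair_wavePacket hφ.hasCompactSupport hs a (x n)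
    rw [inv_inv] at hpair
    rw [hpair, enorm_mul, enorm_complex_ofReal_of_nonneg (pow_nonneg hs.le d), inv_pow,
      ENNReal.ofReal_inv_of_pos (pow_pos hn d), ← ENNReal.div_eq_inv_mul, ← mul_div_assoc]
    gcongr
    simpa only [div_inv_eq_mul, mul_div_cancel₀ _ hr.ne'] using hbound μh hs a (x n)
  rw [nonpos_iff_eq_zero, mul_eq_zero, enorm_eq_zero, enorm_eq_zero] at hle
  exact hle.resolve_right hφ0

end SparseBalls

/-- If `μ` is a non-negative Poisson measure on `ℝ^d` with Fourier transform
`μh`, and on some sequence of balls `B(x_n, R_n)` with `R_n → ∞` either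
`μ(B(x_n,R_n)) = o(R_n^d)` or `|μ̂|(B(x_n,R_n)) = o(R_n^d)`, then `μ = 0`. -/
theorem statement3 {d : ℕ} (μ μh : PPM (Ed d))
    (hμpos : μ.Nonneg)
    (hμlf : μ.locFinite) (hμt : μ.temperate)
    (hμhlf : μh.locFinite) (hFμ : IsFT μ μh)
    (x : ℕ → Ed d) (R : ℕ → ℝ) (hR : Tendsto R atTop atTop)
    (h : Tendsto (fun n => μ.var (ball (x n) (R n)) / ENNReal.ofReal (R n ^ d))
          atTop (𝓝 0) ∨
         Tendsto (fun n => μh.var (ball (x n) (R n)) / ENNReal.ofReal (R n ^ d))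
          atTop (𝓝 0)) :
    μ.mass = 0 := by
  rcases h with hvar | hvar
  · exact hFμ.mass_eq_zero_of_tendsto_var_div hμpos hμt hμhlf hR hvar
  · have hbounded : μ.TranslationBounded := hFμ.translationBounded hμpos hμt hμhlf
    exact hFμ.mass_eq_zero_of_tendsto_fourier_var_div hbounded hR hvar

end
end

section
/- Let E = ∪_n B(x_n, R_n) be a union of balls in ℝ^d with R_n → ∞ as n → ∞. Let A = {a_n} ⊂ ℝ^d and C = {c_n} ⊂ ℝ^d be sequences such that μ_A = Σ_n δ_{a_n} and μ_C = Σ_n δ_{c_n} are both Poisson measures, and suppose that under an appropriate numbering a_n − c_n → 0 as n → ∞ along n ∈ H, where H = {n ∈ ℕ : a_n ∈ E or c_n ∈ E}. Then μ_A = μ_C. -/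
open MeasureTheory Metric Filter Topology Complex SchwartzMap Bornology
open scoped RealInnerProductSpace ENNReal

noncomputable section

variable {d : ℕ}

/-- The counting measure of the multiset `{a_n}`, evaluated on a set `S`
(`μ_A(S) = #{n : a_n ∈ S}`, with multiplicity). -/
def cnt {d : ℕ} (a : ℕ → Ed d) (S : Set (Ed d)) : ℝ≥0∞ :=
  ∑' n : ℕ, S.indicator (fun _ => (1 : ℝ≥0∞)) (a n)

/-- The counting measure `μ_A = Σ_n δ_{a_n}` is a temperate distribution. -/
def seqTemperate {d : ℕ} (a : ℕ → Ed d) : Prop :=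
  ∀ φ : SchwartzMap (Ed d) ℂ, Summable fun n : ℕ => φ (a n)

/-- `ν` is the distributional Fourier transform of `μ_A = Σ_n δ_{a_n}`. -/
def seqIsFT {d : ℕ} (a : ℕ → Ed d) (ν : PPM (Ed d)) : Prop :=
  ∀ φ : SchwartzMap (Ed d) ℂ, HasCompactSupport φ →
    ∑' n : ℕ, (FourierTransform.fourierCLE ℂ (SchwartzMap (Ed d) ℂ) φ) (a n) = ν.pair ⇑φ

/-- `μ_A = Σ_n δ_{a_n}` is a Poisson measure. -/
def seqPoisson {d : ℕ} (a : ℕ → Ed d) : Prop :=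
  (∀ r : ℝ, cnt a (ball 0 r) < ⊤) ∧ seqTemperate a ∧
    ∃ ν : PPM (Ed d), ν.locFinite ∧ seqIsFT a ν

/-!
For a band-limited Schwartz function `ψ`, the Fourier side expresses
`t ↦ ∑ ψ (a n - t) - ∑ ψ (c n - t)` as an absolutely convergent series of characters, i.e. as an
almost periodic function of `t`. Taking `ψ` nonnegative with `ψ 0 = 1`, the same expansion of
`∑ ψ (a n - t)` is bounded in `t`, so a ball of fixed radius holds boundedly many points of either
sequence. Hence the difference tends to `0` when `t` goes to infinity inside ever larger balls of
`E`: near `t` the points pair up with `a n - c n` small, and far from `t` the decay of `ψ` wins. An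
almost periodic function with that property vanishes identically, and the dilates of `ψ`
concentrating at a point `p` then give `p` the same multiplicity in both sequences.
-/

section Characters

/-- The characters `x ↦ χ i x` agree along an ultrafilter with a limit phase `u i`; moving the base
point back by `y` then cancels that phase. -/
theorem tsum_mul_addChar_eq_zero_of_tendsto {ι G : Type*} [AddCommGroup G]
    (χ : ι → AddChar G Circle) {w : ι → ℂ} (hw : Summable fun i => ‖w i‖) {l : Filter G} [l.NeBot]
    (hl : ∀ t, Tendsto (fun y => ∑' i, w i * χ i (t + y)) l (𝓝 0)) (t : G) :
    ∑' i, w i * χ i t = 0 := by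
  let U : Ultrafilter G := Ultrafilter.of l
  have exists_phase (i : ι) : ∃ u : Circle, Tendsto (χ i) U (𝓝 u) :=
    ⟨_, (U.map (χ i)).le_nhds_lim⟩
  choose u hu using exists_phase
  have tendsto_series {v : G → ι → Circle} {v₀ : ι → Circle}
      (hv : ∀ i, Tendsto (fun y => v y i) U (𝓝 (v₀ i))) :
      Tendsto (fun y => ∑' i, w i * v y i) U (𝓝 (∑' i, w i * v₀ i)) :=
    tendsto_tsum_of_dominated_convergence hw
      (fun i => ((continuous_subtype_val.tendsto _).comp (hv i)).const_mul _)
      (.of_forall fun y i => by rw [norm_mul, Circle.norm_coe, mul_one])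
  have phase_eq_zero (y : G) : ∑' i, w i * (χ i (t - y) * u i : Circle) = 0 := by
    refine tendsto_nhds_unique (tendsto_series fun i => ?_)
      ((hl (t - y)).mono_left (Ultrafilter.of_le l))
    simpa only [AddChar.map_add_eq_mul] using (hu i).const_mul (χ i (t - y))
  have phase_cancels : Tendsto (fun y => ∑' i, w i * (χ i (t - y) * u i : Circle)) U
      (𝓝 (∑' i, w i * χ i t)) := by
    refine tendsto_series fun i => ?_
    simpa only [AddChar.map_sub_eq_div, div_mul_cancel] using
      ((hu i).const_div' (χ i t)).mul_const (u i)
  simpa only [phase_eq_zero, tendsto_const_nhds_iff, eq_comm] using phase_cancels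

end Characters

section Bandlimited

open scoped FourierTransform

variable {V : Type*} [NormedAddCommGroup V] [InnerProductSpace ℝ V]

/-- The character `t ↦ exp (2πi⟪s, t⟫)` of frequency `s`. -/
def planeWave (s : V) : AddChar V Circle :=
  Real.fourierChar.compAddMonoidHom (innerₛₗ ℝ s : V →ₗ[ℝ] ℝ).toAddMonoidHom

theorem planeWave_apply (s t : V) : planeWave s t = Real.fourierChar (inner ℝ s t) := rfl

theorem norm_mul_planeWave (z : ℂ) (s t : V) : ‖z * planeWave s t‖ = ‖z‖ := by
  rw [norm_mul, Circle.norm_coe, mul_one]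

variable [FiniteDimensional ℝ V] [MeasurableSpace V] [BorelSpace V]

/-- A Schwartz function is *band-limited* if its inverse Fourier transform has compact support.
These are the functions `𝓕 φ` against which a distributional Fourier transform is tested. -/
def IsBandlimited (ψ : 𝓢(V, ℂ)) : Prop := HasCompactSupport (𝓕⁻ ψ : 𝓢(V, ℂ))

theorem coe_fourierInv_compSubConstCLM (ψ : 𝓢(V, ℂ)) (t : V) :
    ⇑(𝓕⁻ (ψ.compSubConstCLM ℂ t) : 𝓢(V, ℂ)) = fun s => 𝓕⁻ ψ s * planeWave s t := by
  ext s
  simp only [SchwartzMap.fourierInv_coe, Real.fourierInv_eq, SchwartzMap.compSubConstCLM_apply]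
  rw [← integral_add_right_eq_self _ t, ← integral_mul_const]
  refine integral_congr_ae (.of_forall fun v => ?_)
  simp only [inner_add_left, AddChar.map_add_eq_mul, add_sub_cancel_right, planeWave_apply,
    Circle.smul_def, Circle.coe_mul, smul_eq_mul, real_inner_comm t s]
  ring

theorem IsBandlimited.compSubConstCLM {ψ : 𝓢(V, ℂ)} (hψ : IsBandlimited ψ) (t : V) :
    IsBandlimited (ψ.compSubConstCLM ℂ t) := by
  rw [IsBandlimited, coe_fourierInv_compSubConstCLM]
  exact HasCompactSupport.mul_right hψ

theorem IsBandlimited.exists_comp_smul {ψ : 𝓢(V, ℂ)} (hψ : IsBandlimited ψ) {r : ℝ} (hr : r ≠ 0) :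
    ∃ ψ' : 𝓢(V, ℂ), IsBandlimited ψ' ∧ ∀ x, ψ' x = ψ (r • x) := by
  let ψ' : 𝓢(V, ℂ) := SchwartzMap.compCLMOfContinuousLinearEquiv ℂ
    (ContinuousLinearEquiv.smulLeft (Units.mk0 r hr)) ψ
  have hψ' (x : V) : ψ' x = ψ (r • x) := rfl
  refine ⟨ψ', ?_, hψ'⟩
  have fourierInv_dilation :
      ⇑(𝓕⁻ ψ' : 𝓢(V, ℂ)) = fun s => |(r ^ Module.finrank ℝ V)⁻¹| • 𝓕⁻ ψ (r⁻¹ • s) := by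
    ext s
    simp only [SchwartzMap.fourierInv_coe, Real.fourierInv_eq, hψ']
    rw [← Measure.integral_comp_smul volume]
    simp only [inner_smul_left, inner_smul_right, conj_trivial, inv_mul_cancel_left₀ hr]
  rw [IsBandlimited, fourierInv_dilation]
  have hcomp : HasCompactSupport fun s => (𝓕⁻ ψ : 𝓢(V, ℂ)) (r⁻¹ • s) :=
    HasCompactSupport.comp_smul hψ (inv_ne_zero hr)
  exact hcomp.comp_left (g := fun z => |(r ^ Module.finrank ℝ V)⁻¹| • z) (smul_zero _)

theorem conj_fourier_eq_self_s4 {f : V → ℂ} (hf : ∀ v, (starRingEnd ℂ) (f (-v)) = f v) (x : V) :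
    (starRingEnd ℂ) (𝓕 f x) = 𝓕 f x := by
  rw [Real.fourier_eq, ← integral_conj, ← integral_neg_eq_self]
  refine integral_congr_ae (.of_forall fun v => ?_)
  simp only [Circle.smul_def, smul_eq_mul, map_mul, inner_neg_left, neg_neg, hf,
    ← Circle.coe_inv_eq_conj, ← AddChar.map_neg_eq_inv]

theorem exists_isBandlimited_nonneg (V : Type*) [NormedAddCommGroup V] [InnerProductSpace ℝ V]
    [FiniteDimensional ℝ V] [MeasurableSpace V] [BorelSpace V] :
    ∃ ψ : 𝓢(V, ℂ), IsBandlimited ψ ∧ (∀ x, ψ x = (‖ψ x‖ : ℂ)) ∧ ψ 0 = 1 := by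
  let b : ContDiffBump (0 : V) := ⟨1, 2, one_pos, one_lt_two⟩
  have hsupp : HasCompactSupport fun x => (b.normed volume x : ℂ) :=
    b.hasCompactSupport_normed.comp_left Complex.ofReal_zero
  let g : 𝓢(V, ℂ) := hsupp.toSchwartzMap (Complex.ofRealCLM.contDiff.comp b.contDiff_normed)
  have hg (x : V) : g x = (b.normed volume x : ℂ) := rfl
  have hreal (x : V) : (starRingEnd ℂ) (𝓕 g x) = 𝓕 g x :=
    conj_fourier_eq_self_s4 (fun v => by rw [hg, hg, b.normed_neg, Complex.conj_ofReal]) x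
  have hmass : 𝓕 g 0 = 1 := by
    simp only [SchwartzMap.fourier_coe, Real.fourier_eq, inner_zero_right, neg_zero,
      AddChar.map_zero_eq_one, one_smul, hg]
    rw [integral_complex_ofReal, b.integral_normed, Complex.ofReal_one]
  let φ := SchwartzMap.convolution (ContinuousLinearMap.mul ℂ ℂ) g g
  have hφ (x : V) : 𝓕 φ x = 𝓕 g x * 𝓕 g x := by
    rw [SchwartzMap.fourier_convolution]
    rfl
  have hφ_supp : HasCompactSupport φ := by
    rw [show ⇑φ = _ from funext (SchwartzMap.convolution_apply (ContinuousLinearMap.mul ℂ ℂ) g g)]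
    exact hsupp.convolution (ContinuousLinearMap.mul ℂ ℂ) hsupp
  refine ⟨𝓕 φ, ?_, fun x => ?_, ?_⟩
  · rwa [IsBandlimited, FourierTransform.fourierInv_fourier_eq]
  · have hsq : 𝓕 φ x = (‖𝓕 g x‖ : ℂ) ^ 2 := by
      rw [hφ, ← Complex.mul_conj', hreal]
    rw [hsq, norm_pow, Complex.norm_real, norm_norm, Complex.ofReal_pow]
  · rw [hφ, hmass, mul_one]

end Bandlimited

section DecayWeight

variable {V : Type*} [NormedAddCommGroup V] [NormedSpace ℝ V]

/-- The weight `(1 + ‖x‖) ^ (-(n + 1))` on an `n`-dimensional space: integrable, yet of slower decay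
than any Schwartz function. -/
def decayWeight (x : V) : ℝ := ((1 + ‖x‖) ^ (Module.finrank ℝ V + 1))⁻¹

theorem decayWeight_nonneg (x : V) : 0 ≤ decayWeight x := by
  unfold decayWeight
  positivity

theorem continuous_decayWeight : Continuous (decayWeight : V → ℝ) :=
  Continuous.inv₀ (by fun_prop) fun x => by positivity

theorem decayWeight_le_decayWeight {x y : V} (h : ‖x‖ ≤ ‖y‖) : decayWeight y ≤ decayWeight x := by
  unfold decayWeight
  gcongr

theorem decayWeight_le_mul_of_dist_lt {r : ℝ} {x y : V} (h : dist x y < r) :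
    decayWeight x ≤ (1 + r) ^ (Module.finrank ℝ V + 1) * decayWeight y := by
  have hr : 0 < r := dist_nonneg.trans_lt h
  have hy : ‖y‖ ≤ ‖x‖ + r := by
    linarith [norm_le_norm_add_norm_sub' y x, dist_eq_norm' x y]
  have hle : 1 + ‖y‖ ≤ (1 + r) * (1 + ‖x‖) := by nlinarith [norm_nonneg x]
  unfold decayWeight
  rw [← div_eq_mul_inv, inv_le_iff_one_le_mul₀ (by positivity), div_mul_eq_mul_div, ← mul_pow,
    one_le_div (by positivity)]
  gcongr

theorem integrable_decayWeight [FiniteDimensional ℝ V] [MeasurableSpace V] [BorelSpace V]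
    (μ : Measure V) [μ.IsAddHaarMeasure] : Integrable (decayWeight : V → ℝ) μ := by
  have h := integrable_one_add_norm (E := V) (μ := μ) (r := (Module.finrank ℝ V + 1 : ℕ)) (by simp)
  refine h.congr (.of_forall fun x => ?_)
  simp only [decayWeight, Real.rpow_neg (add_nonneg zero_le_one (norm_nonneg x)),
    Real.rpow_natCast]

variable {F : Type*} [NormedAddCommGroup F] [NormedSpace ℝ F]

theorem exists_norm_le_mul_decayWeight (ψ : 𝓢(V, F)) :
    ∃ C : ℝ, 0 < C ∧ ∀ x, ‖ψ x‖ ≤ C * (1 + ‖x‖)⁻¹ * decayWeight x := by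
  set k := Module.finrank ℝ V + 2
  have hψ := SchwartzMap.one_add_le_sup_seminorm_apply (𝕜 := ℝ) (m := (k, 0)) le_rfl le_rfl ψ
  simp only [norm_iteratedFDeriv_zero] at hψ
  set C := 2 ^ k * ((Finset.Iic (k, 0)).sup fun m => SchwartzMap.seminorm ℝ m.1 m.2) ψ
  have hC : 0 ≤ C := le_trans (by positivity) (hψ 0)
  refine ⟨C + 1, by linarith, fun x => ?_⟩
  rw [decayWeight, mul_assoc, ← mul_inv, ← pow_succ', ← div_eq_mul_inv,
    le_div_iff₀ (by positivity), mul_comm]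
  exact (hψ x).trans (by linarith)

theorem exists_norm_le_mul_decayWeight_of_le_norm (ψ : 𝓢(V, F)) {η : ℝ} (hη : 0 < η) :
    ∃ ρ : ℝ, 0 < ρ ∧ ∀ x, ρ ≤ ‖x‖ → ‖ψ x‖ ≤ η * decayWeight x := by
  obtain ⟨C, hC, hψ⟩ := exists_norm_le_mul_decayWeight ψ
  refine ⟨C / η, div_pos hC hη, fun x hx => (hψ x).trans ?_⟩
  have hCη : C ≤ η * (1 + ‖x‖) := by
    rw [div_le_iff₀' hη] at hx
    linarith
  gcongr
  · exact decayWeight_nonneg x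
  · rwa [← div_eq_mul_inv, div_le_iff₀ (by positivity)]

/-- Where `x` or `y` is in a large ball, uniform continuity makes the difference small; elsewhere
both values are small compared with the weight. -/
theorem exists_norm_sub_le_mul_decayWeight [FiniteDimensional ℝ V] (ψ : 𝓢(V, F)) {η : ℝ}
    (hη : 0 < η) :
    ∃ ρ δ : ℝ, 0 < δ ∧ ∀ x y, (‖x‖ < ρ ∨ ‖y‖ < ρ → ‖x - y‖ < δ) →
      ‖ψ x - ψ y‖ ≤ η * (decayWeight x + decayWeight y) := by
  have : ProperSpace V := FiniteDimensional.proper_real V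
  obtain ⟨ρ, hρ, hfar⟩ := exists_norm_le_mul_decayWeight_of_le_norm ψ hη
  set m := ((1 + ρ) ^ (Module.finrank ℝ V + 1))⁻¹
  have hm : 0 < m := by positivity
  have le_decayWeight {x : V} (hx : ‖x‖ < ρ) : m ≤ decayWeight x := by
    unfold m decayWeight
    gcongr
  have hψ : UniformContinuous ψ := ZeroAtInftyContinuousMap.uniformContinuous ψ.toZeroAtInfty
  obtain ⟨δ, hδ, hnear⟩ := Metric.uniformContinuous_iff.1 hψ (η * m) (mul_pos hη hm)
  refine ⟨ρ, δ, hδ, fun x y hxy => ?_⟩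
  by_cases h : ‖x‖ < ρ ∨ ‖y‖ < ρ
  · have hm_le : m ≤ decayWeight x + decayWeight y := by
      rcases h with hx | hy
      · linarith [le_decayWeight hx, decayWeight_nonneg y]
      · linarith [le_decayWeight hy, decayWeight_nonneg x]
    calc ‖ψ x - ψ y‖ ≤ η * m := by
          rw [← dist_eq_norm]
          exact (hnear (by rw [dist_eq_norm]; exact hxy h)).le
      _ ≤ η * (decayWeight x + decayWeight y) := by gcongr
  · push Not at h
    rw [mul_add]
    exact (norm_sub_le _ _).trans (add_le_add (hfar x h.1) (hfar y h.2))

end DecayWeight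

section TranslationBounded

theorem tsum_mul_measure_ball_le {ι X : Type*} [Countable ι] [PseudoMetricSpace X]
    [MeasurableSpace X] [OpensMeasurableSpace X] {a : ι → X} {r : ℝ} {K : ℝ≥0∞}
    (hK : ∀ t, ∑' n, (ball t r).indicator (fun _ => (1 : ℝ≥0∞)) (a n) ≤ K) {f g : X → ℝ≥0∞}
    (hg : Measurable g) (hfg : ∀ x y, dist x y < r → f x ≤ g y) (μ : Measure X) :
    ∑' n, f (a n) * μ (ball (a n) r) ≤ K * ∫⁻ y, g y ∂μ := by
  calc ∑' n, f (a n) * μ (ball (a n) r)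
      ≤ ∑' n, ∫⁻ y, (ball (a n) r).indicator g y ∂μ := ENNReal.tsum_le_tsum fun n => by
        rw [← setLIntegral_const, lintegral_indicator measurableSet_ball]
        exact setLIntegral_mono hg fun y hy => hfg _ _ (mem_ball'.1 hy)
    _ = ∫⁻ y, ∑' n, (ball (a n) r).indicator g y ∂μ :=
        (lintegral_tsum fun n => (hg.indicator measurableSet_ball).aemeasurable).symm
    _ = ∫⁻ y, (∑' n, (ball y r).indicator (fun _ => (1 : ℝ≥0∞)) (a n)) * g y ∂μ := by
        refine lintegral_congr fun y => ?_
        classical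
        simp only [← ENNReal.tsum_mul_right, Set.indicator_apply, mem_ball_comm (x := y), ite_mul,
          one_mul, zero_mul]
    _ ≤ ∫⁻ y, K * g y ∂μ := lintegral_mono fun y => mul_le_mul_left (hK y) _
    _ = K * ∫⁻ y, g y ∂μ := lintegral_const_mul K hg

variable {ι V : Type*} [NormedAddCommGroup V]

/-- The points `a n`, counted with multiplicity, are *translation bounded* if balls of some fixed
radius contain boundedly many of them. -/
def IsTranslationBounded (a : ι → V) : Prop :=
  ∃ r : ℝ, 0 < r ∧ ∃ K : ℝ≥0∞, K ≠ ⊤ ∧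
    ∀ t, ∑' n, (ball t r).indicator (fun _ => (1 : ℝ≥0∞)) (a n) ≤ K

namespace IsTranslationBounded

variable {a : ι → V}

theorem tsum_indicator_singleton_ne_top (ha : IsTranslationBounded a) (p : V) :
    ∑' n, ({p} : Set V).indicator (fun _ => (1 : ℝ≥0∞)) (a n) ≠ ⊤ := by
  obtain ⟨r, hr, K, hK, hcount⟩ := ha
  refine ((ENNReal.tsum_le_tsum fun n => ?_).trans (hcount p)).trans_lt hK.lt_top |>.ne
  exact Set.indicator_le_indicator_of_subset (Set.singleton_subset_iff.2 (mem_ball_self hr))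
    (fun _ => zero_le) _

theorem nontrivial [Infinite ι] (ha : IsTranslationBounded a) : Nontrivial V := by
  by_contra hV
  rw [not_nontrivial_iff_subsingleton] at hV
  refine ha.tsum_indicator_singleton_ne_top 0 ?_
  simp only [Subsingleton.elim (a _) 0, Set.indicator_of_mem (Set.mem_singleton (0 : V))]
  exact ENNReal.tsum_const_eq_top_of_ne_zero one_ne_zero

variable [NormedSpace ℝ V] [FiniteDimensional ℝ V] [Countable ι]

theorem exists_tsum_decayWeight_le (ha : IsTranslationBounded a) :
    ∃ K : ℝ, ∀ z, (Summable fun n => decayWeight (a n - z)) ∧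
      ∑' n, decayWeight (a n - z) ≤ K := by
  borelize V
  obtain ⟨r, hr, K, hK, hcount⟩ := ha
  let μ : Measure V := Measure.addHaar
  let g (z y : V) := ENNReal.ofReal ((1 + r) ^ (Module.finrank ℝ V + 1) * decayWeight (y - z))
  have hg (z : V) : Measurable (g z) :=
    (continuous_decayWeight.comp (continuous_sub_right z)).measurable.const_mul _ |>.ennreal_ofReal
  have decayWeight_le (z x y : V) (hxy : dist x y < r) :
      ENNReal.ofReal (decayWeight (x - z)) ≤ g z y :=
    ENNReal.ofReal_le_ofReal (decayWeight_le_mul_of_dist_lt (by rwa [dist_sub_right]))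
  let B := K * (∫⁻ y, g 0 y ∂μ) / μ (ball 0 r)
  have hB : B ≠ ⊤ := by
    have hint : Integrable (fun y => (1 + r) ^ (Module.finrank ℝ V + 1) * decayWeight y) μ :=
      (integrable_decayWeight μ).const_mul _
    have hgint : ∫⁻ y, g 0 y ∂μ ≠ ⊤ := by
      simpa only [g, sub_zero] using hint.lintegral_lt_top.ne
    exact ENNReal.div_ne_top (ENNReal.mul_ne_top hK hgint) (measure_ball_pos μ 0 hr).ne'
  have tsum_le (z : V) : ∑' n, ENNReal.ofReal (decayWeight (a n - z)) ≤ B := by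
    rw [ENNReal.le_div_iff_mul_le (.inl (measure_ball_pos μ 0 hr).ne')
      (.inl measure_ball_lt_top.ne), ← ENNReal.tsum_mul_right]
    have hgz : ∫⁻ y, g z y ∂μ = ∫⁻ y, g 0 y ∂μ := by
      simpa only [g, sub_zero] using lintegral_sub_right_eq_self (μ := μ) (g 0) z
    simpa only [Measure.addHaar_ball_center, hgz] using
      tsum_mul_measure_ball_le hcount (hg z) (decayWeight_le z) μ
  refine ⟨B.toReal, fun z => ?_⟩
  have hsum : Summable fun n => decayWeight (a n - z) :=
    (ENNReal.summable_toReal (ne_top_of_le_ne_top hB (tsum_le z))).congr fun n =>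
      ENNReal.toReal_ofReal (decayWeight_nonneg _)
  refine ⟨hsum, (ENNReal.ofReal_le_iff_le_toReal hB).1 ?_⟩
  rw [ENNReal.ofReal_tsum_of_nonneg (fun n => decayWeight_nonneg _) hsum]
  exact tsum_le z

theorem tendsto_tsum_comp_smul_sub {F : Type*} [NormedAddCommGroup F] [NormedSpace ℝ F]
    [CompleteSpace F] (ha : IsTranslationBounded a) (ψ : 𝓢(V, F)) (p : V) :
    Tendsto (fun r : ℝ => ∑' n, ψ (r • (a n - p))) atTop
      (𝓝 (∑' n, ({p} : Set V).indicator (fun _ => ψ 0) (a n))) := by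
  obtain ⟨K, hK⟩ := ha.exists_tsum_decayWeight_le
  obtain ⟨C, hC, hψ⟩ := exists_norm_le_mul_decayWeight ψ
  refine tendsto_tsum_of_dominated_convergence ((hK p).1.mul_left C) (fun n => ?_) ?_
  · rcases eq_or_ne (a n) p with hn | hn
    · simp only [hn, sub_self, smul_zero, Set.indicator_of_mem (Set.mem_singleton p)]
      exact tendsto_const_nhds
    · rw [Set.indicator_of_notMem (by rwa [Set.mem_singleton_iff])]
      refine (zero_at_infty ψ.toZeroAtInfty).comp ?_
      rw [← cobounded_eq_cocompact, ← tendsto_norm_atTop_iff_cobounded]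
      simp only [norm_smul]
      exact tendsto_norm_atTop_atTop.atTop_mul_const (norm_sub_pos_iff.2 hn)
  · filter_upwards [eventually_ge_atTop 1] with r hr n
    have hnorm : ‖a n - p‖ ≤ ‖r • (a n - p)‖ := by
      rw [norm_smul, Real.norm_of_nonneg (zero_le_one.trans hr)]
      exact le_mul_of_one_le_left (norm_nonneg _) hr
    calc ‖ψ (r • (a n - p))‖
        ≤ C * (1 + ‖r • (a n - p)‖)⁻¹ * decayWeight (r • (a n - p)) := hψ _
      _ ≤ C * 1 * decayWeight (a n - p) := by
        gcongr
        · exact decayWeight_nonneg _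
        · exact inv_le_one_of_one_le₀ (le_add_of_nonneg_right (norm_nonneg _))
        · exact decayWeight_le_decayWeight hnorm
      _ = C * decayWeight (a n - p) := by rw [mul_one]

end IsTranslationBounded

end TranslationBounded

section DeepFilter

variable {ι V : Type*} [NormedAddCommGroup V] {E : Set V}

/-- The filter of points that go to infinity while lying ever deeper inside `E`. -/
def deepFilter (E : Set V) : Filter V := ⨅ r : ℝ, 𝓟 {z | r ≤ ‖z‖ ∧ ball z r ⊆ E}

theorem eventually_deepFilter (E : Set V) (r : ℝ) :
    ∀ᶠ z in deepFilter E, r ≤ ‖z‖ ∧ ball z r ⊆ E :=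
  mem_iInf_of_mem r (mem_principal_self _)

theorem tendsto_const_add_deepFilter (E : Set V) (t : V) :
    Tendsto (t + ·) (deepFilter E) (deepFilter E) := by
  refine tendsto_iInf.2 fun r => tendsto_principal.2 ?_
  filter_upwards [eventually_deepFilter E (r + ‖t‖)] with z ⟨hz, hzE⟩
  refine ⟨?_, (ball_subset_ball' ?_).trans hzE⟩
  · linarith [norm_sub_le_norm_add z (-t), norm_neg t, norm_add_le (t + z) (-t),
      congrArg norm (show t + z + -t = z by abel)]
  · rw [dist_eq_norm, add_sub_cancel_right]

theorem deepFilter_neBot [NormedSpace ℝ V] [Nontrivial V] (hE : ∀ r : ℝ, ∃ z, ball z r ⊆ E) :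
    (deepFilter E).NeBot := by
  refine iInf_neBot_of_directed' (Antitone.directed_ge fun r s hrs => ?_) fun r => ?_
  · exact principal_mono.2 fun z hz => ⟨hrs.trans hz.1, (ball_subset_ball hrs).trans hz.2⟩
  · rw [principal_neBot_iff]
    obtain ⟨z, hz⟩ := hE (2 * |r|)
    obtain ⟨e, he⟩ := exists_norm_eq V (abs_nonneg r)
    have mem_of_norm_sub {y : V} (hy : ‖y - z‖ = |r|) (hry : r ≤ ‖y‖) :
        y ∈ {z | r ≤ ‖z‖ ∧ ball z r ⊆ E} := by
      refine ⟨hry, (ball_subset_ball' ?_).trans hz⟩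
      linarith [dist_eq_norm y z, le_abs_self r]
    -- the two points `z ± e` are at distance `2 * |r|`, so one of them has norm at least `|r|`
    by_cases hplus : r ≤ ‖z + e‖
    · exact ⟨z + e, mem_of_norm_sub (by rwa [add_sub_cancel_left]) hplus⟩
    · refine ⟨z - e, mem_of_norm_sub (by rwa [sub_sub_cancel_left, norm_neg]) ?_⟩
      have htwo : 2 * ‖e‖ ≤ ‖z + e‖ + ‖z - e‖ := by
        rw [← Real.norm_two, ← norm_smul, show (2 : ℝ) • e = (z + e) - (z - e) by module]
        exact norm_sub_le _ _
      linarith [le_abs_self r]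

theorem eventually_deepFilter_norm_sub_lt {a c : ι → V}
    (h : Tendsto (fun n => a n - c n) (cofinite ⊓ 𝓟 {n | a n ∈ E ∨ c n ∈ E}) (𝓝 0))
    (ρ : ℝ) {δ : ℝ} (hδ : 0 < δ) :
    ∀ᶠ z in deepFilter E, ∀ n, ‖a n - z‖ < ρ ∨ ‖c n - z‖ < ρ → ‖a n - c n‖ < δ := by
  have hfin : {n | ¬ (a n ∈ E ∨ c n ∈ E → ‖a n - c n‖ < δ)}.Finite := by
    rw [← eventually_cofinite]
    simpa only [dist_zero_right, Set.mem_ofPred_eq] using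
      eventually_inf_principal.1 (Metric.tendsto_nhds.1 h δ hδ)
  obtain ⟨Ma, hMa⟩ := (hfin.image fun n => ‖a n‖).bddAbove
  obtain ⟨Mc, hMc⟩ := (hfin.image fun n => ‖c n‖).bddAbove
  filter_upwards [eventually_deepFilter E ρ, eventually_deepFilter E (max Ma Mc + ρ)]
    with z ⟨_, hzE⟩ ⟨hz, _⟩ n hn
  by_contra hδn
  have hEn : a n ∈ E ∨ c n ∈ E :=
    hn.imp (fun ha => hzE (mem_ball_iff_norm.2 ha)) (fun hc => hzE (mem_ball_iff_norm.2 hc))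
  have hbad : n ∈ {n | ¬ (a n ∈ E ∨ c n ∈ E → ‖a n - c n‖ < δ)} := fun hclose => hδn (hclose hEn)
  have ha : ‖a n‖ ≤ max Ma Mc := (hMa (Set.mem_image_of_mem _ hbad)).trans (le_max_left _ _)
  have hc : ‖c n‖ ≤ max Ma Mc := (hMc (Set.mem_image_of_mem _ hbad)).trans (le_max_right _ _)
  rcases hn with hn | hn
  · linarith [norm_le_norm_add_norm_sub (a n) z]
  · linarith [norm_le_norm_add_norm_sub (c n) z]

variable [NormedSpace ℝ V] [FiniteDimensional ℝ V] [Countable ι]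
  {F : Type*} [NormedAddCommGroup F] [NormedSpace ℝ F]

theorem IsTranslationBounded.tendsto_tsum_sub_deepFilter {a c : ι → V}
    (ha : IsTranslationBounded a) (hc : IsTranslationBounded c)
    (h : Tendsto (fun n => a n - c n) (cofinite ⊓ 𝓟 {n | a n ∈ E ∨ c n ∈ E}) (𝓝 0))
    (ψ : 𝓢(V, F)) :
    Tendsto (fun z => ∑' n, (ψ (a n - z) - ψ (c n - z))) (deepFilter E) (𝓝 0) := by
  obtain ⟨Ka, hKa⟩ := ha.exists_tsum_decayWeight_le
  obtain ⟨Kc, hKc⟩ := hc.exists_tsum_decayWeight_le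
  have hK : 0 ≤ Ka + Kc := add_nonneg
    ((tsum_nonneg fun _ => decayWeight_nonneg _).trans (hKa 0).2)
    ((tsum_nonneg fun _ => decayWeight_nonneg _).trans (hKc 0).2)
  refine Metric.tendsto_nhds.2 fun ε hε => ?_
  obtain ⟨ρ, δ, hδ, hψ⟩ :=
    exists_norm_sub_le_mul_decayWeight ψ (η := ε / (Ka + Kc + 1)) (by positivity)
  filter_upwards [eventually_deepFilter_norm_sub_lt h ρ hδ] with z hz
  obtain ⟨hasum, ha_le⟩ := hKa z
  obtain ⟨hcsum, hc_le⟩ := hKc z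
  rw [dist_zero_right]
  calc ‖∑' n, (ψ (a n - z) - ψ (c n - z))‖
      ≤ ε / (Ka + Kc + 1) * (∑' n, decayWeight (a n - z) + ∑' n, decayWeight (c n - z)) :=
        tsum_of_norm_bounded ((hasum.hasSum.add hcsum.hasSum).mul_left _) fun n =>
          hψ _ _ fun hn => by rw [sub_sub_sub_cancel_right]; exact hz n hn
    _ ≤ ε / (Ka + Kc + 1) * (Ka + Kc) := by gcongr
    _ < ε := by
        rw [div_mul_eq_mul_div, div_lt_iff₀ (by positivity)]
        linarith

end DeepFilter

section Poisson

open scoped FourierTransform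

theorem cnt_eq_tsum_cnt_singleton (a : ℕ → Ed d) (S : Set (Ed d)) :
    cnt a S = ∑' p, S.indicator (fun p => cnt a {p}) p := by
  classical
  calc cnt a S = ∑' n, ∑' p, if p = a n then S.indicator (fun _ => (1 : ℝ≥0∞)) p else 0 :=
        tsum_congr fun n => (tsum_ite_eq (a n) _).symm
    _ = ∑' p, ∑' n, if p = a n then S.indicator (fun _ => (1 : ℝ≥0∞)) p else 0 :=
        ENNReal.tsum_comm
    _ = ∑' p, S.indicator (fun p => cnt a {p}) p := tsum_congr fun p => by
        by_cases hp : p ∈ S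
        · simp only [cnt, hp, Set.indicator_of_mem, Set.indicator_apply, Set.mem_singleton_iff,
            eq_comm (a := p)]
        · simp only [hp, not_false_eq_true, Set.indicator_of_notMem, ite_self, tsum_zero]

theorem ofReal_toReal_cnt (a : ℕ → Ed d) (S : Set (Ed d)) :
    ((cnt a S).toReal : ℂ) = ∑' n, S.indicator (fun _ => (1 : ℂ)) (a n) := by
  classical
  have hterm (n : ℕ) : S.indicator (fun _ => (1 : ℝ≥0∞)) (a n) ≠ ⊤ := by
    simp only [Set.indicator_apply]
    split_ifs <;> simp
  rw [cnt, ENNReal.tsum_toReal_eq hterm, Complex.ofReal_tsum]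
  refine tsum_congr fun n => ?_
  simp only [Set.indicator_apply]
  split_ifs <;> simp

theorem PPM.locFinite.summable_norm_mul {ν : PPM (Ed d)} (hν : ν.locFinite) {f : Ed d → ℂ}
    (hf : Continuous f) (hsupp : HasCompactSupport f) : Summable fun s => ‖ν.mass s * f s‖ := by
  obtain ⟨r, hr⟩ := hsupp.isCompact.isBounded.subset_ball (0 : Ed d)
  obtain ⟨M, hM⟩ := hsupp.exists_bound_of_continuous hf
  have hball : Summable fun s : ball (0 : Ed d) r => ‖ν.mass s‖ :=
    NNReal.summable_coe.2 (ENNReal.tsum_coe_ne_top_iff_summable.1 (hν r).ne)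
  have hind : Summable ((ball (0 : Ed d) r).indicator fun s => ‖ν.mass s‖) :=
    summable_subtype_iff_indicator.1 hball
  refine (hind.mul_right M).of_nonneg_of_le (fun _ => norm_nonneg _) fun s => ?_
  by_cases hs : s ∈ ball (0 : Ed d) r
  · rw [Set.indicator_of_mem hs, norm_mul]
    exact mul_le_mul_of_nonneg_left (hM s) (norm_nonneg _)
  · rw [image_eq_zero_of_notMem_tsupport fun h => hs (hr h), mul_zero, norm_zero,
      Set.indicator_of_notMem hs, zero_mul]

theorem seqIsFT.tsum_comp_sub {a : ℕ → Ed d} {ν : PPM (Ed d)} (h : seqIsFT a ν)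
    {ψ : 𝓢(Ed d, ℂ)} (hψ : IsBandlimited ψ) (t : Ed d) :
    ∑' n, ψ (a n - t) = ∑' s, ν.mass s * (𝓕⁻ ψ : 𝓢(Ed d, ℂ)) s * planeWave s t := by
  have hft := h _ (hψ.compSubConstCLM t)
  simpa only [FourierTransform.fourierCLE_apply, FourierTransform.fourier_fourierInv_eq, PPM.pair,
    SchwartzMap.compSubConstCLM_apply, coe_fourierInv_compSubConstCLM, mul_assoc] using hft

namespace seqPoisson

variable {a c : ℕ → Ed d}

theorem summable_comp_sub (ha : seqPoisson a) (ψ : 𝓢(Ed d, ℂ)) (t : Ed d) :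
    Summable fun n => ψ (a n - t) :=
  ha.2.1 (ψ.compSubConstCLM ℂ t)

theorem exists_tsum_comp_sub_eq (ha : seqPoisson a) {ψ : 𝓢(Ed d, ℂ)} (hψ : IsBandlimited ψ) :
    ∃ w : Ed d → ℂ, (Summable fun s => ‖w s‖) ∧
      ∀ t, ∑' n, ψ (a n - t) = ∑' s, w s * planeWave s t := by
  obtain ⟨-, -, ν, hν, hft⟩ := ha
  exact ⟨fun s => ν.mass s * (𝓕⁻ ψ : 𝓢(Ed d, ℂ)) s,
    hν.summable_norm_mul (SchwartzMap.continuous _) hψ, hft.tsum_comp_sub hψ⟩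

theorem exists_tsum_norm_comp_sub_le (ha : seqPoisson a) {ψ : 𝓢(Ed d, ℂ)} (hψ : IsBandlimited ψ)
    (hnonneg : ∀ x, ψ x = (‖ψ x‖ : ℂ)) : ∃ K : ℝ, ∀ t, ∑' n, ‖ψ (a n - t)‖ ≤ K := by
  obtain ⟨w, hw, hseries⟩ := ha.exists_tsum_comp_sub_eq hψ
  refine ⟨∑' s, ‖w s‖, fun t => ?_⟩
  calc ∑' n, ‖ψ (a n - t)‖ = ‖∑' n, ψ (a n - t)‖ := by
        rw [tsum_congr fun n => hnonneg (a n - t), ← Complex.ofReal_tsum, Complex.norm_real,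
          Real.norm_of_nonneg (tsum_nonneg fun _ => norm_nonneg _)]
    _ = ‖∑' s, w s * planeWave s t‖ := by rw [hseries]
    _ ≤ ∑' s, ‖w s‖ := by
        simpa only [norm_mul_planeWave] using norm_tsum_le_tsum_norm
          (f := fun s => w s * (planeWave s t : ℂ)) (by simpa only [norm_mul_planeWave] using hw)

theorem isTranslationBounded (ha : seqPoisson a) : IsTranslationBounded a := by
  obtain ⟨ψ, hψ, hnonneg, hψ0⟩ := exists_isBandlimited_nonneg (Ed d)
  obtain ⟨K, hK⟩ := ha.exists_tsum_norm_comp_sub_le hψ hnonneg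
  have h0 : 1 / 2 < ‖ψ 0‖ := by
    rw [hψ0, norm_one]
    exact one_half_lt_one
  have hnear : ∀ᶠ x in 𝓝 (0 : Ed d), 1 / 2 < ‖ψ x‖ :=
    ψ.continuous.norm.continuousAt.eventually_const_lt h0
  obtain ⟨r, hr, hball⟩ := Metric.eventually_nhds_iff_ball.1 hnear
  refine ⟨r, hr, ENNReal.ofReal (2 * K), ENNReal.ofReal_ne_top, fun t => ?_⟩
  have indicator_le (n : ℕ) : (ball t r).indicator (fun _ => (1 : ℝ≥0∞)) (a n) ≤
      ENNReal.ofReal (2 * ‖ψ (a n - t)‖) := by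
    refine Set.indicator_apply_le' (fun hn => ENNReal.one_le_ofReal.2 ?_) fun _ => zero_le
    linarith [hball (a n - t) (by rwa [mem_ball_zero_iff, ← mem_ball_iff_norm])]
  calc ∑' n, (ball t r).indicator (fun _ => (1 : ℝ≥0∞)) (a n)
      ≤ ∑' n, ENNReal.ofReal (2 * ‖ψ (a n - t)‖) := ENNReal.tsum_le_tsum indicator_le
    _ = ENNReal.ofReal (2 * ∑' n, ‖ψ (a n - t)‖) := by
        rw [← ENNReal.ofReal_tsum_of_nonneg (fun _ => by positivity)
          ((ha.summable_comp_sub ψ t).norm.mul_left 2), tsum_mul_left]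
    _ ≤ ENNReal.ofReal (2 * K) := by
        gcongr
        exact hK t

theorem tsum_comp_sub_eq {E : Set (Ed d)} (hE : ∀ r : ℝ, ∃ z, ball z r ⊆ E)
    (ha : seqPoisson a) (hc : seqPoisson c)
    (h : Tendsto (fun n => a n - c n) (atTop ⊓ 𝓟 {n | a n ∈ E ∨ c n ∈ E}) (𝓝 0))
    {ψ : 𝓢(Ed d, ℂ)} (hψ : IsBandlimited ψ) (t : Ed d) :
    ∑' n, ψ (a n - t) = ∑' n, ψ (c n - t) := by
  have := ha.isTranslationBounded.nontrivial
  have := deepFilter_neBot hE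
  obtain ⟨wa, hwa, ha_series⟩ := ha.exists_tsum_comp_sub_eq hψ
  obtain ⟨wc, hwc, hc_series⟩ := hc.exists_tsum_comp_sub_eq hψ
  have summable_series {w : Ed d → ℂ} (hw : Summable fun s => ‖w s‖) (t : Ed d) :
      Summable fun s => w s * (planeWave s t : ℂ) :=
    .of_norm (by simpa only [norm_mul_planeWave] using hw)
  have hw : Summable fun s => ‖wa s - wc s‖ :=
    (hwa.add hwc).of_nonneg_of_le (fun _ => norm_nonneg _) fun _ => norm_sub_le _ _
  have series_sub (t : Ed d) : ∑' s, (wa s - wc s) * planeWave s t =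
      ∑' n, ψ (a n - t) - ∑' n, ψ (c n - t) := by
    rw [ha_series, hc_series, ← (summable_series hwa t).tsum_sub (summable_series hwc t)]
    simp only [sub_mul]
  have deep_limit :
      Tendsto (fun y => ∑' s, (wa s - wc s) * planeWave s y) (deepFilter E) (𝓝 0) := by
    rw [← Nat.cofinite_eq_atTop] at h
    refine (ha.isTranslationBounded.tendsto_tsum_sub_deepFilter hc.isTranslationBounded h ψ).congr
      fun y => ?_
    rw [series_sub, (ha.summable_comp_sub ψ y).tsum_sub (hc.summable_comp_sub ψ y)]
  rw [← sub_eq_zero, ← series_sub]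
  exact tsum_mul_addChar_eq_zero_of_tendsto planeWave hw
    (fun t => deep_limit.comp (tendsto_const_add_deepFilter E t)) t

theorem cnt_singleton_eq {E : Set (Ed d)} (hE : ∀ r : ℝ, ∃ z, ball z r ⊆ E)
    (ha : seqPoisson a) (hc : seqPoisson c)
    (h : Tendsto (fun n => a n - c n) (atTop ⊓ 𝓟 {n | a n ∈ E ∨ c n ∈ E}) (𝓝 0)) (p : Ed d) :
    cnt a {p} = cnt c {p} := by
  obtain ⟨ψ, hψ, -, hψ0⟩ := exists_isBandlimited_nonneg (Ed d)
  have dilated_sums_eq : ∀ᶠ r : ℝ in atTop,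
      ∑' n, ψ (r • (a n - p)) = ∑' n, ψ (r • (c n - p)) := by
    filter_upwards [eventually_ne_atTop 0] with r hr
    obtain ⟨ψr, hψr, hdil⟩ := hψ.exists_comp_smul hr
    simpa only [hdil] using tsum_comp_sub_eq hE ha hc h hψr p
  have hlim := tendsto_nhds_unique_of_eventuallyEq
    (ha.isTranslationBounded.tendsto_tsum_comp_smul_sub ψ p)
    (hc.isTranslationBounded.tendsto_tsum_comp_smul_sub ψ p) dilated_sums_eq
  rw [hψ0, ← ofReal_toReal_cnt, ← ofReal_toReal_cnt, Complex.ofReal_inj] at hlim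
  exact (ENNReal.toReal_eq_toReal_iff' (ha.isTranslationBounded.tsum_indicator_singleton_ne_top p)
    (hc.isTranslationBounded.tsum_indicator_singleton_ne_top p)).1 hlim

end seqPoisson

theorem statement4_general {E : Set (Ed d)} (hE : ∀ r : ℝ, ∃ z, ball z r ⊆ E) {a c : ℕ → Ed d}
    (hA : seqPoisson a) (hC : seqPoisson c)
    (h : Tendsto (fun n => a n - c n) (atTop ⊓ 𝓟 {n | a n ∈ E ∨ c n ∈ E}) (𝓝 0))
    (S : Set (Ed d)) : cnt a S = cnt c S := by
  simp only [cnt_eq_tsum_cnt_singleton _ S, hA.cnt_singleton_eq hE hC h]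

end Poisson

/-- Let `E = ∪_n B(x_n,R_n)` with `R_n → ∞`, and let `μ_A = Σ δ_{a_n}`,
`μ_C = Σ δ_{c_n}` be Poisson measures such that `a_n - c_n → 0` along
`H = {n : a_n ∈ E or c_n ∈ E}`. Then `μ_A = μ_C`. -/
theorem statement4 {d : ℕ} (x : ℕ → Ed d) (R : ℕ → ℝ) (hR : Tendsto R atTop atTop)
    (E : Set (Ed d)) (hE : E = ⋃ n : ℕ, ball (x n) (R n))
    (a c : ℕ → Ed d) (hA : seqPoisson a) (hC : seqPoisson c)
    (h : Tendsto (fun n => a n - c n)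
      (atTop ⊓ Filter.principal {n : ℕ | a n ∈ E ∨ c n ∈ E}) (𝓝 0)) :
    ∀ S : Set (Ed d), cnt a S = cnt c S := by
  refine statement4_general (fun r => ?_) hA hC h
  obtain ⟨n, hn⟩ := (hR.eventually_ge_atTop r).exists
  exact ⟨x n, hE ▸ (ball_subset_ball hn).trans (Set.subset_iUnion (fun n => ball (x n) (R n)) n)⟩

end
end
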